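/- arXiv:2311.10379 — 3 statements merged into one kernel-verified Lean document; each statement's English description precedes it below -/
import Mathlib

section
/- f(r, C₄) = r^{1/3} + o(r^{1/3}); that is, f(r, C₄)/r^{1/3} tends to 1 as r tends to infinity, where C₄ denotes the cycle on 4 vertices. -/
/-- A complete partition of a graph `G` into `r` parts, encoded as a coloring
`c : V → Fin r` such that between any two distinct color classes there is an edge. -/
def IsCompletePartition {V : Type*} (G : SimpleGraph V) {r : ℕ} (c : V → Fin r) : Prop :=
  ∀ i j : Fin r, i ≠ j → ∃ u v : V, c u = i ∧ c v = j ∧ G.Adj u v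

/-- The cycle on `n` vertices (for `n ≥ 3`). -/
def cycGraph (n : ℕ) : SimpleGraph (ZMod n) :=
  SimpleGraph.fromRel (fun i j => j = i + 1)

/-- `G` contains a subgraph isomorphic to `H`, i.e., there is an injective
graph homomorphism from `H` to `G`. -/
def ContainsCopy {α β : Type*} (H : SimpleGraph α) (G : SimpleGraph β) : Prop :=
  ∃ f : H →g G, Function.Injective f

/-- `f(r, C₄)`: the least `k` such that some `C₄`-free graph admits a complete
partition into `r` parts each of size at most `k`. -/
noncomputable def fC4 (r : ℕ) : ℕ :=
  sInf {k : ℕ | ∃ (n : ℕ) (G : SimpleGraph (Fin n)),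
    ¬ ContainsCopy (cycGraph 4) G ∧
    ∃ c : Fin n → Fin r, IsCompletePartition G c ∧
      ∀ i : Fin r, {v : Fin n | c v = i}.ncard ≤ k}


def noC4 {V : Type*} (G : SimpleGraph V) : Prop :=
  ∀ a b x y : V, a ≠ b → G.Adj a x → G.Adj a y → G.Adj b x → G.Adj b y → x = y

lemma noC4_iff {V : Type*} (G : SimpleGraph V) : ¬ ContainsCopy (cycGraph 4) G ↔ noC4 G := by
  constructor
  · intro h a b x y hab h1 h2 h3 h4
    by_contra hxy
    apply h
    have e1 := h1.ne
    have e2 := h2.ne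
    have e3 := h3.ne
    have e4 := h4.ne
    refine ⟨⟨(![a, x, b, y] : Fin 4 → V), ?_⟩, ?_⟩
    · intro i j hij
      unfold cycGraph at hij
      rw [SimpleGraph.fromRel_adj] at hij
      change Fin 4 at i j
      change i ≠ j ∧ (j = i + 1 ∨ i = j + 1) at hij
      fin_cases i <;> fin_cases j <;> first
        | (exfalso; revert hij; decide)
        | simp [h1, h2, h3, h4, h1.symm, h2.symm, h3.symm, h4.symm]
    · intro i j hij
      change Fin 4 at i j
      change (![a, x, b, y] : Fin 4 → V) i = (![a, x, b, y] : Fin 4 → V) j at hij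
      fin_cases i <;> fin_cases j <;> first
        | rfl
        | simp_all [eq_comm]
  · rintro h ⟨f, hf⟩
    have adj : ∀ i j : ZMod 4, i ≠ j → (j = i + 1 ∨ i = j + 1) → G.Adj (f i) (f j) := by
      intro i j h1 h2
      apply f.map_adj
      unfold cycGraph
      rw [SimpleGraph.fromRel_adj]
      exact ⟨h1, h2⟩
    have := h (f 0) (f 2) (f 1) (f 3) (fun h => absurd (hf h) (by decide))
      (adj _ _ (by decide) (by decide)) (adj _ _ (by decide) (by decide))
      (adj _ _ (by decide) (by decide)) (adj _ _ (by decide) (by decide))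
    exact absurd (hf this) (by decide)

def Cov (ι : Type) (R : ι → ι → Prop) (k : ℕ) : Prop :=
  ∃ (V : Type) (_ : Finite V) (G : SimpleGraph V) (c : V → ι), noC4 G ∧
    (∀ i j, i ≠ j → R i j → ∃ u v, c u = i ∧ c v = j ∧ G.Adj u v) ∧
    ∀ i, {v | c v = i}.ncard ≤ k

lemma Cov.mono {ι : Type} {R R' : ι → ι → Prop} {k k' : ℕ} (h : Cov ι R k)
    (hR : ∀ i j, i ≠ j → R' i j → R i j) (hk : k ≤ k') : Cov ι R' k' := by
  obtain ⟨V, hV, G, c, h1, h2, h3⟩ := h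
  exact ⟨V, hV, G, c, h1, fun i j hij hr => h2 i j hij (hR i j hij hr), fun i => (h3 i).trans hk⟩

lemma Cov.add {ι : Type} {R R' : ι → ι → Prop} {k k' : ℕ} (h : Cov ι R k) (h' : Cov ι R' k') :
    Cov ι (fun i j => R i j ∨ R' i j) (k + k') := by
  obtain ⟨V, hV, G, c, h1, h2, h3⟩ := h
  obtain ⟨V', hV', G', c', h1', h2', h3'⟩ := h'
  refine ⟨V ⊕ V', inferInstance, G ⊕g G', Sum.elim c c', ?_, ?_, ?_⟩
  · rintro (a | a) (b | b) (x | x) (y | y) hab e1 e2 e3 e4 <;> simp_all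
    · exact h1 a b x y hab e1 e2 e3 e4
    · exact h1' a b x y hab e1 e2 e3 e4
  · rintro i j hij (hr | hr)
    · obtain ⟨u, v, e1, e2, e3⟩ := h2 i j hij hr
      exact ⟨.inl u, .inl v, e1, e2, by simpa using e3⟩
    · obtain ⟨u, v, e1, e2, e3⟩ := h2' i j hij hr
      exact ⟨.inr u, .inr v, e1, e2, by simpa using e3⟩
  · intro i
    have : {v | Sum.elim c c' v = i} = Sum.inl '' {v | c v = i} ∪ Sum.inr '' {v | c' v = i} := by
      ext (v | v) <;> simp
    rw [this]
    refine (Set.ncard_union_le _ _).trans ?_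
    rw [Set.ncard_image_of_injective _ Sum.inl_injective, Set.ncard_image_of_injective _ Sum.inr_injective]
    exact add_le_add (h3 i) (h3' i)

lemma Cov.prod {ι : Type} {k : ℕ} (β : Type) [Finite β] (h : Cov ι (fun _ _ => True) k) :
    Cov (β × ι) (fun i j => i.1 = j.1) k := by
  obtain ⟨V, hV, G, c, h1, h2, h3⟩ := h
  refine ⟨β × V, inferInstance, ⟨fun a b => a.1 = b.1 ∧ G.Adj a.2 b.2, ⟨fun a b h => ⟨h.1.symm, h.2.symm⟩⟩,
    ⟨fun a h => G.loopless.irrefl _ h.2⟩⟩, fun v => (v.1, c v.2), ?_, ?_, ?_⟩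
  · rintro ⟨a, a'⟩ ⟨b, b'⟩ ⟨x, x'⟩ ⟨y, y'⟩ hab ⟨e1, f1⟩ ⟨e2, f2⟩ ⟨e3, f3⟩ ⟨e4, f4⟩
    simp only at *
    subst e1 e2 e3
    have := h1 a' b' x' y' (by rintro rfl; exact hab rfl) f1 f2 f3 f4
    rw [this]
  · rintro ⟨i, i'⟩ ⟨j, j'⟩ hij hr
    simp only at hr
    subst hr
    obtain ⟨u, v, e1, e2, e3⟩ := h2 i' j' (by rintro rfl; exact hij rfl) trivial
    exact ⟨(i, u), (i, v), by simp [e1], by simp [e2], rfl, e3⟩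
  · rintro ⟨i, i'⟩
    have : {v : β × V | (v.1, c v.2) = (i, i')} = (fun v => (i, v)) '' {v | c v = i'} := by
      ext ⟨a, b⟩
      simp
      constructor
      · rintro ⟨rfl, h⟩; exact ⟨h, rfl⟩
      · rintro ⟨h, rfl⟩; exact ⟨rfl, h⟩
    rw [this, Set.ncard_image_of_injective _ (fun a b h => (Prod.ext_iff.1 h).2)]
    exact h3 i'

lemma Cov.comap {ι κ : Type} {k : ℕ} (h : Cov ι (fun _ _ => True) k) (f : κ → ι)
    (hf : Function.Injective f) : Cov κ (fun _ _ => True) k := by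
  obtain ⟨V, hV, G, c, h1, h2, h3⟩ := h
  have hc : ∀ v : {v : V // c v ∈ Set.range f}, ∃ j, f j = c v := fun v => v.2
  choose c' hc' using hc
  refine ⟨{v : V // c v ∈ Set.range f}, inferInstance, G.comap Subtype.val, c', ?_, ?_, ?_⟩
  · intro a b x y hab e1 e2 e3 e4
    exact Subtype.ext (h1 a b x y (fun h => hab (Subtype.ext h)) e1 e2 e3 e4)
  · intro i j hij _
    obtain ⟨u, v, e1, e2, e3⟩ := h2 (f i) (f j) (hf.ne hij) trivial
    exact ⟨⟨u, i, e1.symm⟩, ⟨v, j, e2.symm⟩, hf (by rw [hc', e1]), hf (by rw [hc', e2]), e3⟩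
  · intro i
    refine le_trans ?_ (h3 (f i))
    rw [← Set.ncard_image_of_injective _ Subtype.val_injective]
    refine Set.ncard_le_ncard ?_ (Set.toFinite _)
    rintro _ ⟨v, hv, rfl⟩
    simp only [Set.mem_ofPred_eq] at hv ⊢
    rw [← hc', hv]

lemma Cov.base (s : ℕ) : Cov (Fin s) (fun _ _ => True) s := by
  refine ⟨Fin s × Fin s, inferInstance, ⟨fun a b => a.1 ≠ a.2 ∧ b = a.swap, ⟨?_⟩, ⟨?_⟩⟩, Prod.fst, ?_, ?_, ?_⟩
  · rintro a b ⟨h, rfl⟩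
    exact ⟨by simpa [eq_comm] using h, by simp⟩
  · rintro ⟨a, b⟩ ⟨h, h'⟩
    simp at h h'
    exact h h'.1
  · rintro a b x y hab ⟨-, e1⟩ ⟨-, e2⟩ - -
    rw [e1, e2]
  · intro i j hij _
    exact ⟨(i, j), (j, i), rfl, rfl, hij, rfl⟩
  · intro i
    have : {v : Fin s × Fin s | v.1 = i} = (fun v => (i, v)) '' Set.univ := by
      ext ⟨a, b⟩
      simp [eq_comm]
    rw [this, Set.ncard_image_of_injective _ (fun a b h => (Prod.ext_iff.1 h).2)]
    simp [Set.ncard_univ]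

lemma Cov.main (p : ℕ) [Fact p.Prime] :
    Cov (ZMod p × ZMod p × ZMod p) (fun i j => i.1 ≠ j.1) p := by
  obtain ⟨e⟩ : Nonempty (GaloisField p 2 ≃+ (ZMod p × ZMod p)) := by
    have h1 : Module.finrank (ZMod p) (GaloisField p 2) = Module.finrank (ZMod p) (ZMod p × ZMod p) := by
      rw [GaloisField.finrank p (by norm_num)]
      simp
    exact ⟨(LinearEquiv.ofFinrankEq _ _ h1).toAddEquiv⟩
  let X : (ZMod p × ZMod p × ZMod p) × ZMod p → GaloisField p 2 := fun v => e.symm (v.1.1, v.1.2.1)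
  let Y : (ZMod p × ZMod p × ZMod p) × ZMod p → GaloisField p 2 := fun v => e.symm (v.2, v.1.1 * v.2 + v.1.2.2)
  have hXY : ∀ u v, X u = X v → Y u = Y v → u = v := by
    rintro ⟨⟨a, b, c⟩, t⟩ ⟨⟨a', b', c'⟩, t'⟩ h1 h2
    simp only [X, Y, EmbeddingLike.apply_eq_iff_eq, Prod.mk.injEq] at h1 h2
    obtain ⟨rfl, rfl⟩ := h1
    obtain ⟨rfl, h2⟩ := h2
    simp at h2
    simp [h2]
  refine ⟨(ZMod p × ZMod p × ZMod p) × ZMod p, inferInstance,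
    ⟨fun u v => u ≠ v ∧ Y u + Y v = X u * X v, ⟨?_⟩, ⟨?_⟩⟩, Prod.fst, ?_, ?_, ?_⟩
  · rintro u v ⟨h1, h2⟩
    exact ⟨h1.symm, by rw [add_comm, h2, mul_comm]⟩
  · rintro u ⟨h1, -⟩
    exact h1 rfl
  · rintro a b x y hab ⟨-, e1⟩ ⟨-, e2⟩ ⟨-, e3⟩ ⟨-, e4⟩
    have h : (X a - X b) * (X x - X y) = 0 := by linear_combination e2 - e1 + e3 - e4
    rcases mul_eq_zero.1 h with h | h
    · exfalso
      have h' := sub_eq_zero.1 h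
      refine hab (hXY _ _ h' ?_)
      rw [h'] at e1
      linear_combination e1 - e3
    · have h' := sub_eq_zero.1 h
      refine hXY _ _ h' ?_
      rw [h'] at e1
      linear_combination e1 - e2
  · rintro ⟨a, b, c⟩ ⟨a', b', c'⟩ hij hr
    simp only at hr
    have hr' : a - a' ≠ 0 := sub_ne_zero.2 hr
    obtain ⟨⟨z1, z2⟩, hz⟩ : ∃ z, e (e.symm (a, b) * e.symm (a', b')) = z := ⟨_, rfl⟩
    let t := (z2 - c - c' - a' * z1) / (a - a')
    have ht : t * (a - a') = z2 - c - c' - a' * z1 := div_mul_cancel₀ _ hr'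
    refine ⟨((a, b, c), t), ((a', b', c'), z1 - t), rfl, rfl, ?_, ?_⟩
    · intro h
      simp only [Prod.mk.injEq] at h
      exact hr h.1.1
    · apply e.injective
      simp only [X, Y]
      rw [hz, ← map_add, AddEquiv.apply_symm_apply]
      simp only [Prod.mk_add_mk, Prod.mk.injEq]
      refine ⟨by ring, by linear_combination ht⟩
  · intro i
    have : {v : (ZMod p × ZMod p × ZMod p) × ZMod p | v.1 = i} = (fun v => (i, v)) '' Set.univ := by
      ext ⟨a, b⟩
      simp [eq_comm]
    rw [this, Set.ncard_image_of_injective _ (fun a b h => (Prod.ext_iff.1 h).2)]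
    simp [Set.ncard_univ]

lemma Cov.step {p m s : ℕ} (hp : p.Prime) (h : Cov (Fin (p ^ 2)) (fun _ _ => True) m) (hs : s ≤ p ^ 3) :
    Cov (Fin s) (fun _ _ => True) (p + m) := by
  have : Fact p.Prime := ⟨hp⟩
  have e2 : Nonempty (ZMod p × ZMod p ≃ Fin (p ^ 2)) := by
    rw [← Fintype.card_eq]; simp [ZMod.card]; ring
  obtain ⟨e2⟩ := e2
  have h1 : Cov (ZMod p × ZMod p) (fun _ _ => True) m := h.comap e2 e2.injective
  have h2 := (Cov.main p).add (h1.prod (ZMod p))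
  have h3 : Cov (ZMod p × ZMod p × ZMod p) (fun _ _ => True) (p + m) := by
    refine h2.mono (fun i j _ _ => ?_) le_rfl
    exact (em (i.1 = j.1)).symm
  have e3 : Nonempty (Fin s ↪ ZMod p × ZMod p × ZMod p) := by
    rw [Function.Embedding.nonempty_iff_card_le]
    simp [ZMod.card]
    calc s ≤ p ^ 3 := hs
      _ = _ := by ring
  obtain ⟨e3⟩ := e3
  exact h3.comap e3 e3.injective

lemma Cov.crude (t : ℕ) : ∀ s, s ≤ t ^ 3 → Cov (Fin s) (fun _ _ => True) (1024 * t) := by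
  induction t using Nat.strong_induction_on with
  | _ t ih =>
    intro s hs
    by_cases ht : t < 32
    · refine (Cov.base s).mono (fun _ _ _ h => h) (hs.trans ?_)
      calc t ^ 3 = t ^ 2 * t := by ring
        _ ≤ 32 ^ 2 * t := by gcongr
        _ = _ := by norm_num
    · obtain ⟨p, hp, h1, h2⟩ := Nat.exists_prime_lt_and_le_two_mul t (by omega)
      have h3 : p ^ 2 ≤ ((t + 1) / 2) ^ 3 := by
        generalize hq : (t + 1) / 2 = q
        have h4 : t ≤ 2 * q := by omega
        have h5 : 16 ≤ q := by omega
        calc p ^ 2 ≤ (2 * (2 * q)) ^ 2 := by gcongr; omega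
          _ = 16 * q ^ 2 := by ring
          _ ≤ q * q ^ 2 := by gcongr
          _ = _ := by ring
      have h4 := ih ((t + 1) / 2) (by omega) _ h3
      refine (Cov.step hp h4 (hs.trans (by gcongr))).mono (fun _ _ _ h => h) ?_
      omega

lemma fC4_le {r k : ℕ} (h : Cov (Fin r) (fun _ _ => True) k) : fC4 r ≤ k := by
  obtain ⟨V, hV, G, c, h1, h2, h3⟩ := h
  apply Nat.sInf_le
  have := Fintype.ofFinite V
  let e := Fintype.equivFin V
  refine ⟨Fintype.card V, G.comap e.symm, (noC4_iff _).2 ?_, c ∘ e.symm, ?_, ?_⟩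
  · intro a b x y hab e1 e2 e3 e4
    exact e.symm.injective (h1 _ _ _ _ (e.symm.injective.ne hab) e1 e2 e3 e4)
  · intro i j hij
    obtain ⟨u, v, e1, e2, e3⟩ := h2 i j hij trivial
    exact ⟨e u, e v, by simp [e1], by simp [e2], by simpa using e3⟩
  · intro i
    refine le_trans ?_ (h3 i)
    rw [← Set.ncard_image_of_injective _ e.symm.injective]
    refine Set.ncard_le_ncard ?_ (Set.toFinite _)
    rintro _ ⟨v, hv, rfl⟩
    exact hv

lemma fC4_upper {r p t : ℕ} (hp : p.Prime) (hr : r ≤ p ^ 3) (ht : p ^ 2 ≤ t ^ 3) :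
    fC4 r ≤ p + 1024 * t := fC4_le (Cov.step hp (Cov.crude t _ ht) hr)

lemma fC4_mem (r : ℕ) : ∃ (n : ℕ) (G : SimpleGraph (Fin n)), noC4 G ∧
    ∃ c : Fin n → Fin r, IsCompletePartition G c ∧ ∀ i : Fin r, {v : Fin n | c v = i}.ncard ≤ fC4 r := by
  have hne : {k : ℕ | ∃ (n : ℕ) (G : SimpleGraph (Fin n)),
    ¬ ContainsCopy (cycGraph 4) G ∧
    ∃ c : Fin n → Fin r, IsCompletePartition G c ∧
      ∀ i : Fin r, {v : Fin n | c v = i}.ncard ≤ k}.Nonempty := by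
    obtain ⟨V, hV, G, c, h1, h2, h3⟩ := Cov.base r
    have := Fintype.ofFinite V
    let e := Fintype.equivFin V
    refine ⟨Fintype.card V, Fintype.card V, G.comap e.symm, (noC4_iff _).2 ?_, c ∘ e.symm, ?_, ?_⟩
    · intro a b x y hab e1 e2 e3 e4
      exact e.symm.injective (h1 _ _ _ _ (e.symm.injective.ne hab) e1 e2 e3 e4)
    · intro i j hij
      obtain ⟨u, v, e1, e2, e3⟩ := h2 i j hij trivial
      exact ⟨e u, e v, by simp [e1], by simp [e2], by simpa using e3⟩
    · intro i
      refine (Set.ncard_le_card _).trans ?_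
      simp
  obtain ⟨n, G, h1, h2⟩ := Nat.sInf_mem hne
  exact ⟨n, G, (noC4_iff _).1 h1, h2⟩

lemma fC4_lower (r : ℕ) : ∃ n D : ℕ, n ≤ r * fC4 r ∧ r * (r - 1) ≤ D ∧ D ^ 2 ≤ n * (D + n ^ 2) := by
  classical
  obtain ⟨n, G, h1, c, h2, h3⟩ := fC4_mem r
  refine ⟨n, ∑ v, G.degree v, ?_, ?_, ?_⟩
  · have := Finset.card_le_mul_card_image_of_maps_to (f := c) (s := Finset.univ) (t := Finset.univ)
      (fun _ _ => Finset.mem_univ _) (fC4 r) (fun i _ => by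
        have := h3 i
        rwa [Set.ncard_eq_toFinset_card', Set.toFinset_ofPred] at this)
    simpa [mul_comm] using this
  · have hD : ∑ v, G.degree v = (Finset.univ.filter fun p : Fin n × Fin n => G.Adj p.1 p.2).card := by
      rw [Finset.card_filter, Fintype.sum_prod_type]
      refine Finset.sum_congr rfl fun a _ => ?_
      rw [← Finset.card_filter, ← SimpleGraph.card_neighborFinset_eq_degree]
      congr 1
      ext b; simp
    have h4 : (Finset.univ : Finset (Fin r)).offDiag.card = r * (r - 1) := by
      rw [Finset.offDiag_card, Finset.card_univ, Fintype.card_fin, Nat.mul_sub, mul_one]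
    rw [hD, ← h4]
    refine Finset.card_le_card_of_surjOn (fun q => (c q.1, c q.2)) ?_
    rintro ⟨i, j⟩ hij
    have hij' : i ≠ j := by simpa using hij
    obtain ⟨u, v, hu, hv, huv⟩ := h2 i j hij'
    exact ⟨(u, v), by simpa using huv, by simp [hu, hv]⟩
  · have hS : ∑ w, G.degree w ^ 2 ≤ ∑ w, G.degree w + n ^ 2 := by
      have e1 : ∑ w, G.degree w ^ 2 = ∑ a : Fin n, ∑ b : Fin n, (G.neighborFinset a ∩ G.neighborFinset b).card := by
        have : ∀ w, G.degree w ^ 2 = ∑ a : Fin n, ∑ b : Fin n, if G.Adj a w ∧ G.Adj b w then 1 else 0 := by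
          intro w
          rw [← Fintype.sum_prod_type', ← Finset.card_filter, sq, ← SimpleGraph.card_neighborFinset_eq_degree, ← Finset.card_product]
          congr 1
          ext ⟨a, b⟩
          simp [G.adj_comm]
        simp_rw [this]
        rw [Finset.sum_comm]
        refine Finset.sum_congr rfl fun a _ => ?_
        rw [Finset.sum_comm]
        refine Finset.sum_congr rfl fun b _ => ?_
        rw [← Finset.card_filter]
        congr 1
        ext w
        simp
      rw [e1]
      have e2 : ∀ a b : Fin n, (G.neighborFinset a ∩ G.neighborFinset b).card ≤ (if a = b then G.degree a else 0) + 1 := by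
        intro a b
        split_ifs with hab
        · subst hab
          simp
        · rw [zero_add, Finset.card_le_one]
          intro x hx y hy
          simp at hx hy
          exact h1 a b x y hab hx.1 hy.1 hx.2 hy.2
      calc _ ≤ ∑ a : Fin n, ∑ b : Fin n, ((if a = b then G.degree a else 0) + 1) :=
            Finset.sum_le_sum fun a _ => Finset.sum_le_sum fun b _ => e2 a b
        _ = _ := by
          simp [Finset.sum_add_distrib, sq]
    have := sq_sum_le_card_mul_sum_sq (s := Finset.univ) (f := fun w => G.degree w)
    rw [Finset.card_univ, Fintype.card_fin] at this
    exact this.trans (Nat.mul_le_mul_left _ hS)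

section PNTpart
open Complex ArithmeticFunction
open scoped LSeries.notation
noncomputable def GG (s : ℂ) : ℂ := vonMangoldt.LFunctionResidueClassAux (1 : ZMod 1) s - riemannZeta₀ s

lemma GG_cont : ContinuousOn GG {s | 1 ≤ s.re} := by
  unfold GG
  exact (vonMangoldt.continuousOn_LFunctionResidueClassAux _).sub
    differentiable_riemannZeta₀.continuous.continuousOn

noncomputable def aa (n : ℕ) : ℝ := vonMangoldt n - 1

lemma GG_eq {s : ℂ} (hs : 1 < s.re) :
    LSeriesHasSum (fun n => ((aa n : ℝ) : ℂ)) s (GG s) := by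
  have h1 := vonMangoldt.eqOn_LFunctionResidueClassAux (a := (1 : ZMod 1)) isUnit_one hs
  have h2 : (↗(vonMangoldt.residueClass (1 : ZMod 1)) : ℕ → ℂ) = ↗vonMangoldt := by
    ext n
    simp only [vonMangoldt.residueClass]
    rw [Set.indicator_of_mem]
    exact Subsingleton.elim _ _
  rw [h2] at h1
  have hs1 : s ≠ 1 := by rintro rfl; simp at hs
  have h3 := riemannZeta_eq_inv_sub_add hs1
  have h4 := LSeriesHasSum_one hs
  have h5 := (LSeriesSummable_vonMangoldt hs).LSeriesHasSum
  have h6 : GG s = LSeries ↗vonMangoldt s - riemannZeta s := by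
    unfold GG
    rw [h1, h3]
    simp
    ring
  rw [h6]
  convert! h5.sub h4 using 1
  ext n
  simp [aa]

lemma GG_sum {s : ℂ} (hs : 1 < s.re) :
    LSeriesSummable (fun n => ((aa n : ℝ) : ℂ)) s := (GG_eq hs).LSeriesSummable

noncomputable def JJ (lam u : ℝ) : ℝ := ∫ t in (0:ℝ)..lam, (1 - t / lam) * Real.cos (t * u)

lemma JJ_eq {lam u : ℝ} (hl : 0 < lam) (hu : u ≠ 0) :
    JJ lam u = (1 - Real.cos (lam * u)) / (lam * u ^ 2) := by
  unfold JJ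
  rw [intervalIntegral.integral_eq_sub_of_hasDerivAt
    (f := fun t => (1 - t / lam) * (Real.sin (t * u) / u) - Real.cos (t * u) / (lam * u ^ 2))]
  · field_simp
    simp
    ring
  · intro t _
    have h1 : HasDerivAt (fun t : ℝ => t * u) u t := by
      simpa using (hasDerivAt_id t).mul_const u
    have h2 : HasDerivAt (fun t : ℝ => 1 - t / lam) (-(1 / lam)) t := by
      simpa using ((hasDerivAt_id t).div_const lam).const_sub 1
    convert! (h2.mul (h1.sin.div_const u)).sub (h1.cos.div_const (lam * u ^ 2)) using 1
    field_simp
    ring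
  · apply Continuous.intervalIntegrable
    fun_prop

lemma JJ_le {lam u : ℝ} (hl : 0 < lam) (hu : u ≠ 0) : JJ lam u ≤ 2 / (lam * u ^ 2) := by
  rw [JJ_eq hl hu]
  gcongr
  linarith [Real.neg_one_le_cos (lam * u)]

lemma JJ_int {lam : ℝ} (hl : 0 < lam) (c : ℝ) :
    ∫ t in (0:ℝ)..lam, (1 - t / lam) * c = c * lam / 2 := by
  rw [intervalIntegral.integral_mul_const, intervalIntegral.integral_sub (by simp)
    (by apply Continuous.intervalIntegrable; fun_prop)]
  simp
  field_simp
  ring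

lemma JJ_le' {lam u : ℝ} (hl : 0 < lam) : JJ lam u ≤ lam := by
  have : JJ lam u ≤ ∫ t in (0:ℝ)..lam, (1 - t / lam) * 1 := by
    apply intervalIntegral.integral_mono_on hl.le
    · apply Continuous.intervalIntegrable; fun_prop
    · apply Continuous.intervalIntegrable; fun_prop
    · intro t ht
      have : t / lam ≤ 1 := by rw [div_le_one hl]; exact ht.2
      exact mul_le_mul_of_nonneg_left (Real.cos_le_one _) (by linarith)
  rw [JJ_int hl] at this
  linarith

lemma JJ_ge {lam u : ℝ} (hl : 0 < lam) (hu : |u| ≤ 1 / lam) : lam / 4 ≤ JJ lam u := by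
  have : ∫ t in (0:ℝ)..lam, (1 - t / lam) * (1 / 2) ≤ JJ lam u := by
    apply intervalIntegral.integral_mono_on hl.le
    · apply Continuous.intervalIntegrable; fun_prop
    · apply Continuous.intervalIntegrable; fun_prop
    · intro t ht
      have h1 : t / lam ≤ 1 := by rw [div_le_one hl]; exact ht.2
      refine mul_le_mul_of_nonneg_left ?_ (by linarith)
      have h2 : |t * u| ≤ 1 := by
        rw [abs_mul, abs_of_nonneg ht.1]
        calc t * |u| ≤ lam * (1 / lam) := by gcongr; exact ht.2
          _ = 1 := by field_simp
      have h3 := Real.one_sub_sq_div_two_le_cos (x := t * u)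
      have h4 : (t * u) ^ 2 ≤ 1 := by rw [← sq_abs]; nlinarith [abs_nonneg (t * u)]
      linarith
  rw [JJ_int hl] at this
  linarith

lemma JJ_nonneg {lam : ℝ} (hl : 0 < lam) (u : ℝ) : 0 ≤ JJ lam u := by
  by_cases hu : u = 0
  · have := JJ_ge (u := u) hl (by simp [hu, hl.le])
    linarith
  · rw [JJ_eq hl hu]
    have := Real.cos_le_one (lam * u)
    have : 0 ≤ 1 - Real.cos (lam * u) := by linarith
    positivity

lemma term_eq (σ t T : ℝ) (hs : 1 < σ) (n : ℕ) : 
   cexp (t * T * I) * LSeries.term (fun n => ((aa n : ℝ) : ℂ)) (σ + t * I) n =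
     (aa n * (n : ℝ) ^ (-σ) : ℝ) * cexp ((t * (T - Real.log n) : ℝ) * I) := by
  rcases Nat.eq_zero_or_pos n with rfl | hn
  · simp [Real.zero_rpow (by linarith : -σ ≠ 0)]
  rw [LSeries.term_of_ne_zero hn.ne']
  have hn' : (n : ℂ) ≠ 0 := by exact_mod_cast hn.ne'
  push_cast
  rw [ofReal_cpow (by positivity), div_eq_mul_inv, ← cpow_neg, cpow_def_of_ne_zero hn',
    ofReal_natCast, cpow_def_of_ne_zero hn', ← natCast_log, mul_left_comm, ← Complex.exp_add,
    mul_assoc (aa n : ℂ), ← Complex.exp_add]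
  push_cast
  ring_nf

lemma key_hasSum {lam σ T : ℝ} (hl : 0 < lam) (hs : 1 < σ) :
    HasSum (fun n : ℕ => aa n * (n : ℝ) ^ (-σ) * JJ lam (T - Real.log n))
      (∫ t in (0:ℝ)..lam, (1 - t / lam : ℝ) * (cexp (t * T * I) * GG (σ + t * I))).re := by
  have h : HasSum (fun n : ℕ => ∫ t in (0:ℝ)..lam, (1 - t / lam : ℝ) * (cexp (t * T * I) *
      LSeries.term (fun n => ((aa n : ℝ) : ℂ)) (σ + t * I) n))
      (∫ t in (0:ℝ)..lam, (1 - t / lam : ℝ) * (cexp (t * T * I) * GG (σ + t * I))) := by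
    have hsum : Summable (fun n : ℕ => |aa n * (n : ℝ) ^ (-σ)|) := by
      have := (GG_sum (s := σ) (by simpa using hs)).norm
      refine this.congr fun n => ?_
      have h := term_eq σ 0 0 hs n
      simp only [ofReal_zero, zero_mul, Complex.exp_zero, one_mul, add_zero, mul_one] at h
      rw [h, norm_real, Real.norm_eq_abs]
    apply intervalIntegral.hasSum_integral_of_dominated_convergence
      (bound := fun n _ => |aa n * (n : ℝ) ^ (-σ)|)
    · intro n
      simp only [term_eq σ _ T hs n]
      apply Continuous.aestronglyMeasurable
      fun_prop
    · intro n
      refine Filter.Eventually.of_forall fun t ht => ?_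
      rw [Set.uIoc_of_le hl.le] at ht
      rw [term_eq σ _ T hs n, norm_mul, norm_mul, norm_exp_ofReal_mul_I, norm_real, norm_real,
        Real.norm_eq_abs, Real.norm_eq_abs, mul_one]
      have h1 : t / lam ≤ 1 := by rw [div_le_one hl]; exact ht.2
      have h2 : 0 ≤ t / lam := div_nonneg ht.1.le hl.le
      refine mul_le_of_le_one_left (abs_nonneg _) ?_
      rw [abs_le]; constructor <;> linarith
    · exact Filter.Eventually.of_forall fun t ht => hsum
    · simp
    · refine Filter.Eventually.of_forall fun t ht => ?_
      exact ((GG_eq (s := σ + t * I) (by simpa using hs)).mul_left _).mul_left _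
  have h2 := Complex.hasSum_re h
  convert! h2 using 1
  ext n
  have hc : Continuous (fun t : ℝ => ((1 - t / lam : ℝ) : ℂ) * (cexp (t * T * I) *
      LSeries.term (fun n => ((aa n : ℝ) : ℂ)) (σ + t * I) n)) := by
    simp only [term_eq σ _ T hs n]
    fun_prop
  have h3 := reCLM.intervalIntegral_comp_comm (hc.intervalIntegrable (μ := MeasureTheory.volume) 0 lam)
  simp only [reCLM_apply] at h3
  rw [← h3, JJ, ← intervalIntegral.integral_const_mul]
  congr 1
  ext t
  rw [term_eq σ _ T hs n, re_ofReal_mul, re_ofReal_mul, exp_ofReal_mul_I_re]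
  ring

noncomputable def II (lam σ T : ℝ) : ℂ :=
  ∫ t in (0:ℝ)..lam, (1 - t / lam : ℝ) * (cexp (t * T * I) * GG (σ + t * I))

lemma GG_cont2 : Continuous (fun p : ℝ × ℝ => GG ((max p.1 1 : ℝ) + p.2 * I)) := by
  apply GG_cont.comp_continuous
  · fun_prop
  · intro p; simp

lemma II_tendsto (lam T : ℝ) : Filter.Tendsto (fun σ => II lam σ T) (nhdsWithin 1 (Set.Ioi 1)) (nhds (II lam 1 T)) := by
  have hc : Continuous (fun σ : ℝ => ∫ t in (0:ℝ)..lam,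
      ((1 - t / lam : ℝ) : ℂ) * (cexp (t * T * I) * GG ((max σ 1 : ℝ) + t * I))) := by
    apply intervalIntegral.continuous_parametric_intervalIntegral_of_continuous'
    have := GG_cont2
    apply Continuous.mul
    · fun_prop
    · exact Continuous.mul (by fun_prop) this
  have h1 := (hc.tendsto 1).mono_left (nhdsWithin_le_nhds (s := Set.Ioi 1))
  have h2 : II lam 1 T = ∫ t in (0:ℝ)..lam,
      ((1 - t / lam : ℝ) : ℂ) * (cexp (t * T * I) * GG ((max 1 1 : ℝ) + t * I)) := by
    simp [II]
  rw [h2]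
  refine h1.congr' ?_
  filter_upwards [self_mem_nhdsWithin] with σ hσ
  rw [II, max_eq_left (le_of_lt hσ)]

lemma II_RL {lam : ℝ} (hl : 0 < lam) : Filter.Tendsto (fun T => II lam 1 T) Filter.atTop (nhds 0) := by
  have h := Real.tendsto_integral_exp_smul_cocompact
    (fun t : ℝ => (Set.Ioc (0:ℝ) lam).indicator (fun t : ℝ => ((1 - t / lam : ℝ) : ℂ) * GG (1 + t * I)) t)
  have h2 : Filter.Tendsto (fun T : ℝ => - T / (2 * Real.pi)) Filter.atTop (Filter.cocompact ℝ) := by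
    refine Filter.Tendsto.mono_right ?_ (atBot_le_cocompact)
    apply Filter.Tendsto.atBot_div_const (by positivity)
    exact Filter.tendsto_neg_atTop_atBot
  refine (h.comp h2).congr fun T => ?_
  simp only [Function.comp]
  rw [II, intervalIntegral.integral_of_le hl.le, ← MeasureTheory.integral_indicator measurableSet_Ioc]
  congr 1
  ext t
  by_cases ht : t ∈ Set.Ioc 0 lam
  · simp only [Set.indicator_of_mem ht, Circle.smul_def, Real.fourierChar_apply, smul_eq_mul]
    rw [mul_left_comm]
    congr 2
    · congr 1
      push_cast
      have : (Real.pi : ℂ) ≠ 0 := by exact_mod_cast Real.pi_ne_zero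
      field_simp
  · simp [Set.indicator_of_notMem ht]

lemma cheb_win (m : ℕ) (s : Finset ℕ) (hs : ∀ n ∈ s, 0 < n ∧ ⌊Real.log n⌋₊ = m) :
    ∑ n ∈ s, vonMangoldt n / n ≤ (Real.log 4 + 4) * Real.exp 1 := by
  have h0 : ∀ n ∈ s, Real.exp m ≤ n ∧ (n:ℝ) < Real.exp (m + 1) := by
    intro n hn
    obtain ⟨h1, h2⟩ := hs n hn
    have hn1 : (1:ℝ) ≤ n := by exact_mod_cast h1
    rw [Nat.floor_eq_iff (Real.log_nonneg hn1)] at h2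
    have h3 : (0:ℝ) < n := by linarith
    exact ⟨(Real.le_log_iff_exp_le h3).1 h2.1, (Real.log_lt_iff_lt_exp h3).1 h2.2⟩
  have h1 : ∑ n ∈ s, vonMangoldt n / n ≤ ∑ n ∈ s, vonMangoldt n * Real.exp (-m) := by
    apply Finset.sum_le_sum
    intro n hn
    rw [div_eq_mul_inv, Real.exp_neg]
    have := (h0 n hn).1
    have := vonMangoldt_nonneg (n := n)
    gcongr
  have h2 : ∑ n ∈ s, vonMangoldt n ≤ Chebyshev.psi (Real.exp (m + 1)) := by
    unfold Chebyshev.psi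
    apply Finset.sum_le_sum_of_subset_of_nonneg
    · intro n hn
      simp only [Finset.mem_Ioc]
      exact ⟨(hs n hn).1, Nat.le_floor (h0 n hn).2.le⟩
    · intros; exact vonMangoldt_nonneg
  have h3 := Chebyshev.psi_le_const_mul_self (Real.exp_pos (m + 1)).le
  rw [← Finset.sum_mul] at h1
  calc _ ≤ _ := h1
    _ ≤ (Real.log 4 + 4) * Real.exp (m + 1) * Real.exp (-m) := by gcongr; linarith
    _ = _ := by rw [mul_assoc, ← Real.exp_add]; ring_nf

lemma sq_shift {a b : ℝ} (h : |a - b| ≤ 1) : 1 / (1 + a ^ 2) ≤ 3 / (1 + b ^ 2) := by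
  rw [div_le_div_iff₀ (by positivity) (by positivity)]
  have := abs_le.1 h
  nlinarith [sq_nonneg (a - (b - a)), sq_nonneg (a + (b-a)), sq_nonneg (2*a-b)]

lemma cheb_sum : ∃ C : ℝ, 0 < C ∧ ∀ T : ℝ, 0 ≤ T → ∀ s : Finset ℕ,
    ∑ n ∈ s, vonMangoldt n / n * (1 / (1 + (T - Real.log n) ^ 2)) ≤ C := by
  have hsm : Summable (fun k : ℤ => 1 / (1 + (k:ℝ) ^ 2)) := by
    have h1 : Summable (fun k : ℤ => 2 * (1 / (k:ℝ) ^ 2)) := (Real.summable_one_div_int_pow.2 (by norm_num)).mul_left 2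
    refine Summable.of_norm_bounded_eventually h1 ?_
    rw [Filter.eventually_cofinite]
    refine (Set.finite_singleton (0:ℤ)).subset ?_
    intro k hk
    by_contra h0
    apply hk
    have h0 : k ≠ 0 := h0
    have : (0:ℝ) < (k:ℝ)^2 := by positivity
    rw [Real.norm_of_nonneg (by positivity), mul_one_div, div_le_div_iff₀ (by positivity) this]
    nlinarith
  set D := (Real.log 4 + 4) * Real.exp 1 with hD
  have hDpos : 0 < D := by positivity
  set S := ∑' k : ℤ, 1 / (1 + (k:ℝ) ^ 2) with hS
  have hSpos : 0 ≤ S := tsum_nonneg fun k => by positivity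
  refine ⟨9 * D * S + 1, by positivity, fun T hT s => ?_⟩
  have key : ∀ s : Finset ℕ, (∀ n ∈ s, 0 < n) →
     ∑ n ∈ s, vonMangoldt n / n * (1 / (1 + (T - Real.log n) ^ 2)) ≤ 9 * D * S := by
    intro s hs
    rw [← Finset.sum_fiberwise_of_maps_to (t := s.image fun n : ℕ => ⌊Real.log n⌋₊)
      (g := fun n : ℕ => ⌊Real.log n⌋₊) (fun n hn => Finset.mem_image_of_mem _ hn)]
    have h1 : ∀ m ∈ s.image (fun n : ℕ => ⌊Real.log n⌋₊),
       ∑ n ∈ s.filter (fun n : ℕ => ⌊Real.log n⌋₊ = m), vonMangoldt n / n * (1 / (1 + (T - Real.log n) ^ 2))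
        ≤ 9 * D * (1 / (1 + (((⌊T⌋₊ : ℤ) - (m : ℤ) : ℤ) : ℝ) ^ 2)) := by
      intro m _
      have h2 : ∀ n ∈ s.filter (fun n : ℕ => ⌊Real.log n⌋₊ = m),
        vonMangoldt n / n * (1 / (1 + (T - Real.log n) ^ 2)) ≤
         vonMangoldt n / n * (9 * (1 / (1 + (((⌊T⌋₊ : ℤ) - (m : ℤ) : ℤ) : ℝ) ^ 2))) := by
        intro n hn
        rw [Finset.mem_filter] at hn
        refine mul_le_mul_of_nonneg_left ?_ (div_nonneg vonMangoldt_nonneg (by positivity))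
        have hn1 : (1:ℝ) ≤ n := by exact_mod_cast hs n hn.1
        have h3 := hn.2
        rw [Nat.floor_eq_iff (Real.log_nonneg hn1)] at h3
        have h4 := Nat.floor_le hT
        have h5 := Nat.lt_floor_add_one T
        have h6 := sq_shift (a := T - Real.log n) (b := T - m) (by rw [abs_le]; constructor <;> linarith)
        have h7 := sq_shift (a := T - m) (b := ⌊T⌋₊ - m) (by rw [abs_le]; constructor <;> linarith)
        push_cast
        calc (1:ℝ) / (1 + (T - Real.log n) ^ 2) ≤ _ := h6
          _ = 3 * (1 / (1 + (T - m)^2)) := by ring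
          _ ≤ 3 * (3 / (1 + ((⌊T⌋₊:ℝ) - m) ^ 2)) := mul_le_mul_of_nonneg_left h7 (by norm_num)
          _ = _ := by ring
      refine (Finset.sum_le_sum h2).trans ?_
      rw [← Finset.sum_mul]
      have h8 := cheb_win m (s.filter (fun n : ℕ => ⌊Real.log n⌋₊ = m)) (fun n hn => by
        rw [Finset.mem_filter] at hn
        exact ⟨hs n hn.1, hn.2⟩)
      rw [mul_comm (9:ℝ) D, mul_assoc D]
      exact mul_le_mul_of_nonneg_right h8 (by positivity)
    refine (Finset.sum_le_sum h1).trans ?_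
    rw [← Finset.mul_sum]
    refine mul_le_mul_of_nonneg_left ?_ (by positivity)
    have hinj : Function.Injective (fun m : ℕ => (⌊T⌋₊ : ℤ) - (m : ℤ)) := by
      intro a b h
      simp at h
      exact h
    rw [← Finset.sum_image (f := fun k : ℤ => 1 / (1 + (k:ℝ) ^ 2)) (g := fun m : ℕ => (⌊T⌋₊ : ℤ) - (m : ℤ)) hinj.injOn]
    exact hsm.sum_le_tsum _ (fun _ _ => by positivity)
  have h9 : ∑ n ∈ s, vonMangoldt n / n * (1 / (1 + (T - Real.log n) ^ 2)) =
      ∑ n ∈ s with 0 < n, vonMangoldt n / n * (1 / (1 + (T - Real.log n) ^ 2)) := by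
    rw [Finset.sum_filter]
    refine Finset.sum_congr rfl fun n _ => ?_
    rcases Nat.eq_zero_or_pos n with rfl | h
    · simp
    · simp [h]
  rw [h9]
  have := key (s.filter (fun n => 0 < n)) (fun n hn => (Finset.mem_filter.1 hn).2)
  linarith

lemma pp_win : ∃ C : ℝ, 0 < C ∧ ∀ T dl : ℝ, ∀ s : Finset ℕ,
    (∀ n ∈ s, 0 < n ∧ ¬ n.Prime ∧ |T - Real.log n| < dl) →
    ∑ n ∈ s, vonMangoldt n / n ≤ C * Real.exp (3 * dl / 2) * Real.exp (- T / 2) := by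
  obtain ⟨C, hC⟩ := Chebyshev.psi_sub_theta_le_mul_sqrt
  refine ⟨|C| + 1, by positivity, fun T dl s hs => ?_⟩
  have h0 : ∀ n ∈ s, Real.exp (T - dl) ≤ n ∧ (n:ℝ) < Real.exp (T + dl) := by
    intro n hn
    obtain ⟨h1, -, h2⟩ := hs n hn
    have h3 : (0:ℝ) < n := by exact_mod_cast h1
    rw [abs_lt] at h2
    exact ⟨(Real.le_log_iff_exp_le h3).1 (by linarith), (Real.log_lt_iff_lt_exp h3).1 (by linarith)⟩
  have h1 : ∑ n ∈ s, vonMangoldt n / n ≤ ∑ n ∈ s, vonMangoldt n * Real.exp (-(T - dl)) := by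
    apply Finset.sum_le_sum
    intro n hn
    rw [div_eq_mul_inv, Real.exp_neg]
    have := (h0 n hn).1
    have := vonMangoldt_nonneg (n := n)
    gcongr
  have h2 : ∑ n ∈ s, vonMangoldt n ≤ (|C| + 1) * Real.exp ((T + dl) / 2) := by
    refine le_trans ?_ ((hC (Real.exp (T + dl))).trans ?_)
    · rw [Chebyshev.psi_sub_theta_eq_sum_not_prime]
      apply Finset.sum_le_sum_of_subset_of_nonneg
      · intro n hn
        simp only [Finset.mem_filter, Finset.mem_Ioc]
        exact ⟨⟨(hs n hn).1, Nat.le_floor (h0 n hn).2.le⟩, (hs n hn).2.1⟩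
      · intros; exact vonMangoldt_nonneg
    · rw [← Real.exp_half]
      gcongr
      linarith [le_abs_self C]
  rw [← Finset.sum_mul] at h1
  refine h1.trans ((mul_le_mul_of_nonneg_right h2 (Real.exp_pos _).le).trans ?_)
  rw [mul_assoc, mul_assoc, ← Real.exp_add, ← Real.exp_add]
  apply le_of_eq
  ring_nf

lemma B_low {lam T : ℝ} (hl : 1 ≤ lam) (hT : lam * Real.exp (-T) ≤ 1 / 2) :
    ∃ W : Finset ℕ, (∀ n ∈ W, 0 < n) ∧
      1 / 24 ≤ ∑ n ∈ W, (n:ℝ)⁻¹ * JJ lam (T - Real.log n) := by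
  have hl0 : 0 < lam := by linarith
  set a := Real.exp T
  have ha : 0 < a := Real.exp_pos T
  set b := Real.exp (T + 1 / lam) with hb
  have hb' : b = a * Real.exp (1 / lam) := by rw [hb, Real.exp_add]
  have hb0 : 0 < b := Real.exp_pos _
  have h1 : 1 / lam + 1 ≤ Real.exp (1 / lam) := Real.add_one_le_exp _
  have h2 : Real.exp (1 / lam) ≤ 3 := by
    have : 1 / lam ≤ 1 := by rw [div_le_one hl0]; exact hl
    have := Real.exp_le_exp.2 this
    linarith [Real.exp_one_lt_d9]
  refine ⟨Finset.Icc ⌈a⌉₊ ⌊b⌋₊, fun n hn => ?_, ?_⟩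
  · rw [Finset.mem_Icc] at hn
    exact lt_of_lt_of_le (Nat.ceil_pos.2 ha) hn.1
  have h3 : ∀ n ∈ Finset.Icc ⌈a⌉₊ ⌊b⌋₊, b⁻¹ * (lam / 4) ≤ (n:ℝ)⁻¹ * JJ lam (T - Real.log n) := by
    intro n hn
    rw [Finset.mem_Icc] at hn
    have h4 : a ≤ n := Nat.ceil_le.1 hn.1
    have h5 : (n:ℝ) ≤ b := (Nat.le_floor_iff hb0.le).1 hn.2
    have hn0 : (0:ℝ) < n := by linarith
    have h6 : T ≤ Real.log n := (Real.le_log_iff_exp_le hn0).2 h4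
    have h7 : Real.log n ≤ T + 1 / lam := (Real.log_le_iff_le_exp hn0).2 h5
    have h8 := JJ_ge (u := T - Real.log n) hl0 (by rw [abs_le]; constructor <;> linarith [one_div_pos.2 hl0])
    gcongr
  have h9 := Finset.card_nsmul_le_sum _ _ _ h3
  refine le_trans ?_ h9
  rw [Nat.card_Icc, nsmul_eq_mul]
  have h10 : b - a - 1 ≤ ((⌊b⌋₊ + 1 - ⌈a⌉₊ : ℕ) : ℝ) := by
    have e1 := Nat.lt_floor_add_one b
    have e2 := Nat.ceil_lt_add_one ha.le
    have e3 : ((⌊b⌋₊ + 1 : ℕ) : ℝ) - (⌈a⌉₊ : ℝ) ≤ ((⌊b⌋₊ + 1 - ⌈a⌉₊ : ℕ) : ℝ) := by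
      rw [sub_le_iff_le_add]; norm_cast; omega
    push_cast at e3
    linarith
  have h11 : lam ≤ a / 2 := by
    rw [Real.exp_neg] at hT
    change lam * a⁻¹ ≤ 1 / 2 at hT
    field_simp at hT
    linarith
  have h12 : a / lam - 1 ≤ b - a - 1 := by
    rw [hb']
    have := mul_le_mul_of_nonneg_left h1 ha.le
    have e : a * (1 / lam + 1) = a / lam + a := by ring
    linarith
  have h13 : b ≤ 3 * a := by rw [hb']; nlinarith
  have h14 : a / (2 * lam) ≤ a / lam - 1 := by
    have : a / lam = a / (2 * lam) + a / (2 * lam) := by field_simp; ring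
    have : 1 ≤ a / (2 * lam) := by rw [le_div_iff₀ (by positivity)]; linarith
    linarith
  calc (1:ℝ)/24 = a / (2 * lam) * ((3 * a)⁻¹ * (lam / 4)) := by field_simp; norm_num
    _ ≤ _ := by
      gcongr
      linarith

theorem prime_near (dl : ℝ) (hdl : 0 < dl) : ∀ᶠ T : ℝ in Filter.atTop, ∃ p : ℕ, p.Prime ∧ |T - Real.log p| < dl := by
  obtain ⟨C, hC0, hC⟩ := cheb_sum
  obtain ⟨C2, hC20, hC2⟩ := pp_win
  set E := 2 * (1 + 1 / dl ^ 2) with hE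
  have hE0 : 0 < E := by positivity
  obtain ⟨lam, hl1, hl2⟩ : ∃ lam : ℝ, 1 ≤ lam ∧ E / lam * C ≤ 1 / 100 := by
    refine ⟨max 1 (100 * E * C), le_max_left _ _, ?_⟩
    have h : 100 * E * C ≤ max 1 (100 * E * C) := le_max_right _ _
    rw [div_mul_eq_mul_div, div_le_iff₀ (by positivity)]
    linarith
  have hl0 : 0 < lam := by linarith
  have t1 : Filter.Tendsto (fun T : ℝ => lam * Real.exp (-T)) Filter.atTop (nhds (lam * 0)) :=
    Real.tendsto_exp_neg_atTop_nhds_zero.const_mul _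
  have t2 : Filter.Tendsto (fun T : ℝ => lam * (C2 * Real.exp (3 * dl / 2) * Real.exp (-T / 2))) Filter.atTop
      (nhds (lam * (C2 * Real.exp (3 * dl / 2) * 0))) := by
    refine (Filter.Tendsto.const_mul _ ?_).const_mul _
    have := Real.tendsto_exp_neg_atTop_nhds_zero.comp (Filter.tendsto_id.atTop_div_const (show (0:ℝ) < 2 by norm_num))
    refine this.congr fun T => ?_
    simp [neg_div]
  have t3 : Filter.Tendsto (fun T : ℝ => (II lam 1 T).re) Filter.atTop (nhds 0) := by
    have := (Complex.continuous_re.tendsto 0).comp (II_RL hl0)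
    simpa [Function.comp_def] using this
  filter_upwards [t1.eventually_lt_const (show lam * 0 < 1 / 2 by simp),
    t2.eventually_lt_const (show _ < (1:ℝ) / 100 by simp),
    t3.eventually_const_lt (show (-1 / 100 : ℝ) < 0 by norm_num), Filter.eventually_ge_atTop 0] with T h1 h2 h3 hT
  by_contra! hno
  obtain ⟨W, hW0, hW⟩ := B_low hl1 h1.le
  have hA : ∀ σ : ℝ, 1 < σ → ∀ s : Finset ℕ,
      ∑ n ∈ s, vonMangoldt n * (n:ℝ) ^ (-σ) * JJ lam (T - Real.log n) ≤ 1 / 50 := by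
    intro σ hσ s
    have hp : ∀ n ∈ s, vonMangoldt n * (n:ℝ) ^ (-σ) * JJ lam (T - Real.log n) ≤
        E / lam * (vonMangoldt n / n * (1 / (1 + (T - Real.log n) ^ 2))) +
        lam * (if 0 < n ∧ ¬ n.Prime ∧ |T - Real.log n| < dl then vonMangoldt n / n else 0) := by
      intro n _
      rcases Nat.eq_zero_or_pos n with rfl | hn
      · simp
      have hn1 : (1:ℝ) ≤ n := by exact_mod_cast hn
      have hn0 : (0:ℝ) < n := by linarith
      have hΛ := vonMangoldt_nonneg (n := n)
      have hJ := JJ_nonneg hl0 (T - Real.log n)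
      have e1 : vonMangoldt n * (n:ℝ) ^ (-σ) * JJ lam (T - Real.log n) ≤
          vonMangoldt n / n * JJ lam (T - Real.log n) := by
        rw [div_eq_mul_inv, ← Real.rpow_neg_one]
        have := Real.rpow_le_rpow_of_exponent_le hn1 (show -σ ≤ -1 by linarith)
        gcongr
      refine e1.trans ?_
      have hq : 0 ≤ vonMangoldt n / n := by positivity
      by_cases hu : |T - Real.log n| < dl
      · have hnp : ¬ n.Prime := fun h => absurd hu (not_lt.2 (hno n h))
        rw [if_pos ⟨hn, hnp, hu⟩]
        have := JJ_le' (u := T - Real.log n) hl0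
        have e2 : vonMangoldt n / n * JJ lam (T - Real.log n) ≤ vonMangoldt n / n * lam := by gcongr
        have e3 : 0 ≤ E / lam * (vonMangoldt n / n * (1 / (1 + (T - Real.log n) ^ 2))) := by positivity
        linarith
      · rw [if_neg (fun h => hu h.2.2), mul_zero, add_zero]
        have hu' : T - Real.log n ≠ 0 := by
          intro h; rw [h] at hu; simp at hu; linarith
        rw [mul_left_comm]
        refine mul_le_mul_of_nonneg_left ((JJ_le hl0 hu').trans ?_) hq
        rw [not_lt] at hu
        generalize T - Real.log n = u at hu hu'
        have hu2 : dl ^ 2 ≤ u ^ 2 := by rw [← sq_abs u]; gcongr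
        have hu3 : 0 < u ^ 2 := by positivity
        rw [hE]
        have e4 : 1 / (u^2) ≤ (1 + 1 / dl^2) * (1 / (1 + u^2)) := by
          have e5 : 1 / u ^ 2 ≤ 1 / dl ^ 2 := one_div_le_one_div_of_le (by positivity) hu2
          have e6 : 1 / u ^ 2 = (1 + 1 / u ^ 2) * (1 / (1 + u ^ 2)) := by field_simp; ring
          rw [e6]
          gcongr
        calc 2 / (lam * u^2) = 2 / lam * (1 / u^2) := by field_simp
          _ ≤ 2 / lam * ((1 + 1 / dl^2) * (1 / (1 + u^2))) := by gcongr
          _ = _ := by ring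
    refine (Finset.sum_le_sum hp).trans ?_
    rw [Finset.sum_add_distrib, ← Finset.mul_sum, ← Finset.mul_sum, ← Finset.sum_filter]
    have e5 := hC T hT s
    have e6 := hC2 T dl (s.filter fun n => 0 < n ∧ ¬ n.Prime ∧ |T - Real.log n| < dl)
      (fun n hn => (Finset.mem_filter.1 hn).2)
    have e7 := mul_le_mul_of_nonneg_left e5 (show 0 ≤ E / lam by positivity)
    have e8 := mul_le_mul_of_nonneg_left e6 hl0.le
    linarith
  have hσ : ∀ σ : ℝ, 1 < σ → (II lam σ T).re ≤ 1 / 50 - ∑ n ∈ W, (n:ℝ) ^ (-σ) * JJ lam (T - Real.log n) := by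
    intro σ hσ
    have hs : HasSum _ (II lam σ T).re := key_hasSum (lam := lam) (σ := σ) (T := T) hl0 hσ
    refine le_of_tendsto hs ?_
    filter_upwards [Filter.eventually_ge_atTop W] with s hWs
    have e1 := hA σ hσ s
    have e2 : ∑ n ∈ W, (n:ℝ) ^ (-σ) * JJ lam (T - Real.log n) ≤ ∑ n ∈ s, (n:ℝ) ^ (-σ) * JJ lam (T - Real.log n) := by
      apply Finset.sum_le_sum_of_subset_of_nonneg hWs
      intro n _ _
      have := JJ_nonneg hl0 (T - Real.log n)
      positivity
    have e3 : ∑ n ∈ s, aa n * (n:ℝ) ^ (-σ) * JJ lam (T - Real.log n) =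
       ∑ n ∈ s, vonMangoldt n * (n:ℝ) ^ (-σ) * JJ lam (T - Real.log n) - ∑ n ∈ s, (n:ℝ) ^ (-σ) * JJ lam (T - Real.log n) := by
      rw [← Finset.sum_sub_distrib]
      refine Finset.sum_congr rfl fun n _ => ?_
      rw [aa]; ring
    linarith
  have hlim1 := (Complex.continuous_re.tendsto _).comp (II_tendsto lam T)
  have hlim2 : Filter.Tendsto (fun σ : ℝ => 1 / 50 - ∑ n ∈ W, (n:ℝ) ^ (-σ) * JJ lam (T - Real.log n))
      (nhdsWithin 1 (Set.Ioi 1)) (nhds (1 / 50 - ∑ n ∈ W, (n:ℝ)⁻¹ * JJ lam (T - Real.log n))) := by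
    refine Filter.Tendsto.mono_left ?_ nhdsWithin_le_nhds
    refine Filter.Tendsto.const_sub _ (tendsto_finsetSum _ fun n hn => ?_)
    refine Filter.Tendsto.mul_const _ ?_
    have hn0 : (n:ℝ) ≠ 0 := by have := hW0 n hn; positivity
    have : Continuous (fun σ : ℝ => (n:ℝ) ^ (-σ)) := by
      exact Real.continuous_const_rpow hn0 |>.comp continuous_neg
    have := this.tendsto 1
    rwa [Real.rpow_neg_one] at this
  have hfin := le_of_tendsto_of_tendsto hlim1 hlim2 (by
    filter_upwards [self_mem_nhdsWithin] with σ h using hσ σ h)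
  linarith

end PNTpart

lemma cube_root_pow (r : ℕ) : ((r : ℝ) ^ ((1 : ℝ) / 3)) ^ 3 = r := by
  rw [← Real.rpow_natCast, ← Real.rpow_mul (Nat.cast_nonneg r)]
  norm_num

lemma cube_root_tendsto :
    Filter.Tendsto (fun r : ℕ => (r : ℝ) ^ ((1 : ℝ) / 3)) Filter.atTop Filter.atTop :=
  (tendsto_rpow_atTop (by norm_num)).comp tendsto_natCast_atTop_atTop

lemma upper_ev (s : ℝ) (hs : 1 < s) :
    ∀ᶠ r : ℕ in Filter.atTop, (fC4 r : ℝ) ≤ s * s * (r : ℝ) ^ ((1 : ℝ) / 3) := by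
  have hd : 0 < Real.log s / 2 := by
    have := Real.log_pos hs
    linarith
  have h1 : Filter.Tendsto (fun r : ℕ => Real.log ((r : ℝ) ^ ((1 : ℝ) / 3)) + Real.log s / 2)
      Filter.atTop Filter.atTop :=
    Filter.tendsto_atTop_add_const_right _ _ (Real.tendsto_log_atTop.comp cube_root_tendsto)
  have h2 := h1.eventually (prime_near (Real.log s / 2) hd)
  obtain ⟨K, hK1, hK2⟩ : ∃ K : ℝ, 1 ≤ K ∧ 2048 ≤ (s - 1) * K := by
    refine ⟨max 1 (2048 / (s - 1)), le_max_left _ _, ?_⟩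
    have h0 : 0 < s - 1 := by linarith
    calc (2048 : ℝ) = (s - 1) * (2048 / (s - 1)) := by field_simp
      _ ≤ _ := by gcongr; exact le_max_right _ _
  have h3 := cube_root_tendsto.eventually (Filter.eventually_ge_atTop (K ^ 3))
  filter_upwards [h2, h3] with r ⟨p, hp, hlog⟩ hx
  have hr := cube_root_pow r
  generalize (r : ℝ) ^ ((1 : ℝ) / 3) = x at *
  have hK3 : 1 ≤ K ^ 3 := one_le_pow₀ hK1
  have hx0 : 0 < x := by linarith
  have hp0 : (0 : ℝ) < p := by exact_mod_cast hp.pos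
  rw [abs_lt] at hlog
  have hxp : x < p := by
    rw [← Real.log_lt_log_iff hx0 hp0]
    linarith
  have hps : p < s * x := by
    rw [← Real.log_lt_log_iff hp0 (by positivity), Real.log_mul (by linarith) hx0.ne']
    linarith
  obtain ⟨z, hz0, hz⟩ : ∃ z : ℝ, 0 ≤ z ∧ z ^ 3 = p :=
    ⟨(p : ℝ) ^ ((1 : ℝ) / 3), by positivity, cube_root_pow p⟩
  have hzK : K ≤ z := by
    refine le_of_pow_le_pow_left₀ (n := 3) (by norm_num) hz0 ?_
    linarith
  have hr3 : r ≤ p ^ 3 := by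
    have : (r : ℝ) ≤ (p : ℝ) ^ 3 := by
      rw [← hr]
      gcongr
    exact_mod_cast this
  have ht : p ^ 2 ≤ ⌈z ^ 2⌉₊ ^ 3 := by
    have : (p : ℝ) ^ 2 ≤ (⌈z ^ 2⌉₊ : ℝ) ^ 3 := by
      calc (p : ℝ) ^ 2 = (z ^ 2) ^ 3 := by rw [← hz]; ring
        _ ≤ _ := by gcongr; exact Nat.le_ceil _
    exact_mod_cast this
  have h4 : (fC4 r : ℝ) ≤ p + 1024 * (⌈z ^ 2⌉₊ : ℝ) := by
    exact_mod_cast fC4_upper hp hr3 ht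
  have h5 : (⌈z ^ 2⌉₊ : ℝ) < z ^ 2 + 1 := Nat.ceil_lt_add_one (by positivity)
  have hz1 : 1 ≤ z := hK1.trans hzK
  have h6 : 2048 ≤ (s - 1) * z := hK2.trans (by gcongr)
  have h7 : 1 ≤ z ^ 2 := one_le_pow₀ hz1
  have h8 : 2048 * z ^ 2 ≤ (s - 1) * p := by
    calc 2048 * z ^ 2 ≤ (s - 1) * z * z ^ 2 := by gcongr
      _ = (s - 1) * z ^ 3 := by ring
      _ = _ := by rw [hz]
  calc (fC4 r : ℝ) ≤ s * p := by linarith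
    _ ≤ s * (s * x) := by gcongr
    _ = _ := by ring

lemma lower_ev (a : ℝ) (ha0 : 0 ≤ a) (ha : a < 1) :
    ∀ᶠ r : ℕ in Filter.atTop, a * (r : ℝ) ^ ((1 : ℝ) / 3) < (fC4 r : ℝ) := by
  obtain ⟨K, hK1, hK2⟩ : ∃ K : ℝ, 2 ≤ K ∧ 4 ≤ (1 - a) * K := by
    refine ⟨max 2 (4 / (1 - a)), le_max_left _ _, ?_⟩
    have h0 : 0 < 1 - a := by linarith
    calc (4 : ℝ) = (1 - a) * (4 / (1 - a)) := by field_simp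
      _ ≤ _ := by gcongr; exact le_max_right _ _
  have h3 := cube_root_tendsto.eventually (Filter.eventually_ge_atTop K)
  filter_upwards [h3, Filter.eventually_ge_atTop 1] with r hx hr1
  have hr := cube_root_pow r
  generalize (r : ℝ) ^ ((1 : ℝ) / 3) = x at *
  by_contra hcon
  push Not at hcon
  obtain ⟨n, D, e1, e2, e3⟩ := fC4_lower r
  have f1 : (n : ℝ) ≤ r * fC4 r := by exact_mod_cast e1
  have f2 : (r : ℝ) * (r - 1) ≤ D := by
    have : ((r * (r - 1) : ℕ) : ℝ) ≤ D := by exact_mod_cast e2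
    rwa [Nat.cast_mul, Nat.cast_sub hr1, Nat.cast_one] at this
  have f3 : (D : ℝ) ^ 2 ≤ n * (D + (n : ℝ) ^ 2) := by exact_mod_cast e3
  have hn0 : (0 : ℝ) ≤ n := Nat.cast_nonneg n
  generalize (n : ℝ) = N at *
  generalize (D : ℝ) = E at *
  rw [← hr] at f1 f2
  have hx2 : 2 ≤ x := hK1.trans hx
  have hx0 : 0 < x := by linarith
  have g1 : N ≤ a * x ^ 4 := by
    calc N ≤ x ^ 3 * fC4 r := f1
      _ ≤ x ^ 3 * (a * x) := by gcongr
      _ = _ := by ring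
  have g2 : N ≤ x ^ 4 := g1.trans (by nlinarith [pow_pos hx0 4])
  have g3 : N ^ 3 ≤ a * x ^ 12 := by
    calc N ^ 3 ≤ (a * x ^ 4) ^ 3 := by gcongr
      _ = (a * a) * (a * x ^ 12) := by ring
      _ ≤ (1 * 1) * (a * x ^ 12) := by gcongr
      _ = _ := by ring
  have g4 : x ^ 3 + x ^ 4 ≤ x ^ 3 * (x ^ 3 - 1) := by
    have : 1 + x ≤ x ^ 3 - 1 := by nlinarith [mul_self_nonneg (x-2), pow_pos hx0 2, mul_pos hx0 hx0]
    calc x ^ 3 + x ^ 4 = x ^ 3 * (1 + x) := by ring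
      _ ≤ _ := by gcongr
  have p3 : 0 < x ^ 3 := by positivity
  have g5 : (x ^ 3 * (x ^ 3 - 1)) * (x ^ 3 * (x ^ 3 - 1) - x ^ 4) ≤ E * (E - N) := by
    apply mul_le_mul f2 (by linarith) (by linarith) (by linarith)
  have g6 : E * (E - N) ≤ a * x ^ 12 := by nlinarith
  have g7 : x ^ 12 - 3 * x ^ 10 ≤ (x ^ 3 * (x ^ 3 - 1)) * (x ^ 3 * (x ^ 3 - 1) - x ^ 4) := by
    have q1 : x ^ 9 ≤ x ^ 10 := pow_le_pow_right₀ (by linarith) (by norm_num)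
    have q2 : 0 < x ^ 6 := by positivity
    have q3 : 0 < x ^ 7 := by positivity
    have : (x ^ 3 * (x ^ 3 - 1)) * (x ^ 3 * (x ^ 3 - 1) - x ^ 4)
      = x ^ 12 - 2 * x ^ 9 - x ^ 10 + x ^ 6 + x ^ 7 := by ring
    linarith
  have g8 : 4 ≤ (1 - a) * x := hK2.trans (by gcongr)
  have g9 : 4 * x ^ 10 < (1 - a) * x ^ 12 := by
    calc 4 * x ^ 10 < 4 * x ^ 11 := by gcongr <;> linarith
      _ ≤ (1 - a) * x * x ^ 11 := by gcongr
      _ = _ := by ring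
  have g10 : 0 < x ^ 10 := by positivity
  linarith

theorem fC4_asymptotics :
    Filter.Tendsto (fun r : ℕ => (fC4 r : ℝ) / (r : ℝ) ^ ((1 : ℝ) / 3))
      Filter.atTop (nhds 1) := by
  have hpos := cube_root_tendsto.eventually (Filter.eventually_gt_atTop 0)
  rw [tendsto_order]
  constructor
  · intro a ha
    filter_upwards [hpos, lower_ev (max a 0) (le_max_right _ _) (max_lt ha one_pos)] with r h1 h2
    rw [lt_div_iff₀ h1]
    refine lt_of_le_of_lt ?_ h2
    gcongr
    exact le_max_left _ _
  · intro b hb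
    obtain ⟨s, hs1, hs2⟩ : ∃ s : ℝ, 1 < s ∧ s * s < b := by
      refine ⟨1 + min 1 ((b - 1) / 4), ?_, ?_⟩
      · have : 0 < min 1 ((b - 1) / 4) := lt_min one_pos (by linarith)
        linarith
      · have h0 : 0 < min 1 ((b - 1) / 4) := lt_min one_pos (by linarith)
        have h1 := min_le_left 1 ((b - 1) / 4)
        have h2 := min_le_right 1 ((b - 1) / 4)
        nlinarith
    filter_upwards [hpos, upper_ev s hs1] with r h1 h2
    rw [div_lt_iff₀ h1]
    refine lt_of_le_of_lt h2 ?_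
    gcongr
end

section
/- Let e ≥ 1 be an integer and q = 2^{2e+1}. The achromatic number of the polarity graph GQ_q^π equals q², and its pseudo-achromatic number also equals q². -/
/-- The pseudo-achromatic number: the largest `r` such that `G` admits a complete
partition into `r` parts. -/
noncomputable def pseudoAchromatic {V : Type*} (G : SimpleGraph V) : ℕ :=
  sSup {r : ℕ | ∃ c : V → Fin r, IsCompletePartition G c}

/-- The achromatic number: the largest `r` such that `G` admits a complete
partition into `r` independent parts. -/
noncomputable def achromatic {V : Type*} (G : SimpleGraph V) : ℕ :=
  sSup {r : ℕ | ∃ c : V → Fin r, IsCompletePartition G c ∧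
    ∀ u v : V, c u = c v → ¬ G.Adj u v}

/-- The polarity graph `GQ_q^π` of the biaffine part of the classical generalized
quadrangle, for `q = 2^(2e+1)`: vertices are triples `(p₁,p₂,p₃)` over `F_q`, with
`(p₁,p₂,p₃)` adjacent to `(r₁,r₂,r₃)` iff they are distinct and
`p₂ + r₃^(2^e) = p₁ r₁^(2^(e+1))` and `p₃ + r₂^(2^(e+1)) = p₁² r₁^(2^(e+1))`. -/
def GQPolarityGraph (e : ℕ) (F : Type*) [Field F] : SimpleGraph (F × F × F) :=
  SimpleGraph.fromRel (fun p r =>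
    p.2.1 + r.2.2 ^ (2 ^ e) = p.1 * r.1 ^ (2 ^ (e + 1)) ∧
    p.2.2 + r.2.1 ^ (2 ^ (e + 1)) = p.1 ^ 2 * r.1 ^ (2 ^ (e + 1)))

theorem gq_sigma_tau {e : ℕ} {F : Type*} [Field F] [Fintype F]
    (hF : Fintype.card F = 2 ^ (2 * e + 1)) (x : F) : (x ^ 2 ^ e) ^ 2 ^ (e + 1) = x := by
  rw [← pow_mul, ← pow_add, show e + (e + 1) = 2 * e + 1 by ring, ← hF, FiniteField.pow_card]

theorem gq_charP {e : ℕ} {F : Type*} [Field F] [Fintype F]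
    (hF : Fintype.card F = 2 ^ (2 * e + 1)) : CharP F 2 :=
  haveI : Fact (Nat.Prime 2) := ⟨Nat.prime_two⟩
  charP_of_card_eq_prime_pow hF

theorem gq_rel_symm {e : ℕ} {F : Type*} [Field F] [Fintype F]
    (hF : Fintype.card F = 2 ^ (2 * e + 1)) (p r : F × F × F)
    (h : p.2.1 + r.2.2 ^ (2 ^ e) = p.1 * r.1 ^ (2 ^ (e + 1)) ∧
      p.2.2 + r.2.1 ^ (2 ^ (e + 1)) = p.1 ^ 2 * r.1 ^ (2 ^ (e + 1))) :
    r.2.1 + p.2.2 ^ (2 ^ e) = r.1 * p.1 ^ (2 ^ (e + 1)) ∧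
      r.2.2 + p.2.1 ^ (2 ^ (e + 1)) = r.1 ^ 2 * p.1 ^ (2 ^ (e + 1)) := by
  haveI := gq_charP hF
  haveI : Fact (Nat.Prime 2) := ⟨Nat.prime_two⟩
  have st : ∀ x : F, (x ^ 2 ^ e) ^ 2 ^ (e + 1) = x := gq_sigma_tau hF
  have ts : ∀ x : F, (x ^ 2 ^ (e + 1)) ^ 2 ^ e = x := fun x => by
    rw [← pow_mul, mul_comm, pow_mul, st]
  obtain ⟨h1, h2⟩ := h
  constructor
  · have := congrArg (fun x => x ^ 2 ^ e) h2
    simp only [add_pow_char_pow, mul_pow, ts] at this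
    rw [← pow_mul, ← pow_succ'] at this
    linear_combination this
  · have := congrArg (fun x => x ^ 2 ^ (e + 1)) h1
    simp only [add_pow_char_pow, mul_pow, st] at this
    have ss : (r.1 ^ 2 ^ (e + 1)) ^ 2 ^ (e + 1) = r.1 ^ 2 := by
      rw [← pow_mul, show 2 ^ (e + 1) * 2 ^ (e + 1) = 2 ^ e * 2 ^ (e + 1) * 2 by ring, pow_mul, pow_mul, st]
    rw [ss] at this
    linear_combination this

theorem gq_adj {e : ℕ} {F : Type*} [Field F] [Fintype F]
    (hF : Fintype.card F = 2 ^ (2 * e + 1)) (p r : F × F × F) :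
    (GQPolarityGraph e F).Adj p r ↔ p ≠ r ∧
      (p.2.1 + r.2.2 ^ (2 ^ e) = p.1 * r.1 ^ (2 ^ (e + 1)) ∧
      p.2.2 + r.2.1 ^ (2 ^ (e + 1)) = p.1 ^ 2 * r.1 ^ (2 ^ (e + 1))) := by
  unfold GQPolarityGraph
  rw [SimpleGraph.fromRel_adj]
  constructor
  · rintro ⟨h, h1 | h1⟩
    · exact ⟨h, h1⟩
    · exact ⟨h, gq_rel_symm hF _ _ h1⟩
  · rintro ⟨h, h1⟩
    exact ⟨h, Or.inl h1⟩

theorem gq_upper {e : ℕ} {F : Type*} [Field F] [Fintype F]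
    (hF : Fintype.card F = 2 ^ (2 * e + 1)) {r : ℕ} (c : F × F × F → Fin r)
    (hc : IsCompletePartition (GQPolarityGraph e F) c) : r ≤ Fintype.card F ^ 2 := by
  classical
  have hc' : ∀ x : {x : Fin r × Fin r // x.1 ≠ x.2}, ∃ u v : F × F × F,
      c u = x.1.1 ∧ c v = x.1.2 ∧ (GQPolarityGraph e F).Adj u v := fun x => hc _ _ x.2
  choose u v hu hv ha using hc'
  have inj : Function.Injective (fun x => (u x, (v x).1)) := by
    intro x y hxy
    simp only [Prod.mk.injEq] at hxy
    obtain ⟨h1, h2⟩ := hxy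
    have hx := gq_rel_symm hF _ _ ((gq_adj hF _ _).1 (ha x)).2
    have hy := gq_rel_symm hF _ _ ((gq_adj hF _ _).1 (ha y)).2
    rw [h1, h2] at hx
    have e1 : (v x).2.1 = (v y).2.1 := add_right_cancel (hx.1.trans hy.1.symm)
    have e2 : (v x).2.2 = (v y).2.2 := add_right_cancel (hx.2.trans hy.2.symm)
    have e3 : v x = v y := Prod.ext h2 (Prod.ext e1 e2)
    apply Subtype.ext
    apply Prod.ext
    · rw [← hu, ← hu, h1]
    · rw [← hv, ← hv, e3]
  have hcard := Fintype.card_le_of_injective _ inj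
  have h1 : Fintype.card {x : Fin r × Fin r // x.1 ≠ x.2} = r * r - r := by
    rw [Fintype.card_subtype]
    have : (Finset.univ.filter fun x : Fin r × Fin r => x.1 ≠ x.2)
        = (Finset.univ : Finset (Fin r)).offDiag := by
      ext x; simp
    rw [this, Finset.offDiag_card]; simp
  rw [h1] at hcard
  simp only [Fintype.card_prod] at hcard
  set q := Fintype.card F with hq
  have hq0 : 0 < q := Fintype.card_pos
  by_contra hlt
  push Not at hlt
  have h2 : r * r ≤ q ^ 4 + r := by
    have : q * (q * q) * q = q ^ 4 := by ring
    omega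
  have h3 : 0 < q ^ 2 := by positivity
  nlinarith

theorem gq_lower {e : ℕ} {F : Type*} [Field F] [Fintype F]
    (hF : Fintype.card F = 2 ^ (2 * e + 1)) : ∃ c : F × F × F → Fin (Fintype.card F ^ 2),
      IsCompletePartition (GQPolarityGraph e F) c ∧
      ∀ u v, c u = c v → ¬ (GQPolarityGraph e F).Adj u v := by
  classical
  let f : F × F ≃ Fin (Fintype.card F ^ 2) :=
    Fintype.equivFinOfCardEq (by rw [Fintype.card_prod, sq])
  have st : ∀ x : F, (x ^ 2 ^ e) ^ 2 ^ (e + 1) = x := gq_sigma_tau hF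
  have ts : ∀ x : F, (x ^ 2 ^ (e + 1)) ^ 2 ^ e = x := fun x => by
    rw [← pow_mul, mul_comm, pow_mul, st]
  refine ⟨fun p => f (p.1, p.2.1), ?_, ?_⟩
  · intro i j hij
    obtain ⟨⟨a, b⟩, rfl⟩ := f.surjective i
    obtain ⟨⟨a', b'⟩, rfl⟩ := f.surjective j
    refine ⟨(a, b, a ^ 2 * a' ^ 2 ^ (e + 1) - b' ^ 2 ^ (e + 1)),
      (a', b', (a * a' ^ 2 ^ (e + 1) - b) ^ 2 ^ (e + 1)), rfl, rfl, ?_⟩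
    rw [gq_adj hF]
    refine ⟨?_, ?_, ?_⟩
    · intro h
      simp only [Prod.mk.injEq] at h
      exact hij (by rw [h.1, h.2.1])
    · simp only [ts]; ring
    · simp only; ring
  · rintro ⟨a, b, t⟩ ⟨a', b', t'⟩ h hadj
    have h' := f.injective h
    simp only [Prod.mk.injEq] at h'
    obtain ⟨rfl, rfl⟩ := h'
    obtain ⟨hne, hr⟩ := (gq_adj hF _ _).1 hadj
    have hr' := gq_rel_symm hF _ _ hr
    apply hne
    have : t = t' := add_right_cancel (hr.2.trans hr'.2.symm)
    rw [this]

theorem achromatic_and_pseudoAchromatic_GQPolarityGraph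
    (e : ℕ) (he : 1 ≤ e) (q : ℕ) (hq : q = 2 ^ (2 * e + 1))
    (F : Type*) [Field F] [Fintype F] (hF : Fintype.card F = q) :
    achromatic (GQPolarityGraph e F) = q ^ 2 ∧
    pseudoAchromatic (GQPolarityGraph e F) = q ^ 2 := by
  have hF' := hF.trans hq
  subst hF
  obtain ⟨c, hc, hi⟩ := gq_lower hF'
  constructor
  · exact IsGreatest.csSup_eq ⟨⟨c, hc, hi⟩, fun r ⟨c', hc', _⟩ => gq_upper hF' c' hc'⟩
  · exact IsGreatest.csSup_eq ⟨⟨c, hc⟩, fun r ⟨c', hc'⟩ => gq_upper hF' c' hc'⟩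
end

section
/- For the sequence ρ_e = 3^{3(2e+1)} (e = 1, 2, 3, ...), one has f(ρ_e, {C₄, C₆, C₈, C₁₀}) = (1 + o(1))·ρ_e^{2/3}; that is, f(ρ_e, {C₄, C₆, C₈, C₁₀}) / 3^{2(2e+1)} tends to 1 as e tends to infinity. -/
/-- `f(r, {C₄, C₆, C₈, C₁₀})`: the least `k` such that some
`{C₄, C₆, C₈, C₁₀}`-free graph admits a complete partition into `r` parts
each of size at most `k`. -/
noncomputable def fC4C6C8C10 (r : ℕ) : ℕ :=
  sInf {k : ℕ | ∃ (n : ℕ) (G : SimpleGraph (Fin n)),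
    ¬ ContainsCopy (cycGraph 4) G ∧ ¬ ContainsCopy (cycGraph 6) G ∧
    ¬ ContainsCopy (cycGraph 8) G ∧ ¬ ContainsCopy (cycGraph 10) G ∧
    ∃ c : Fin n → Fin r, IsCompletePartition G c ∧
      ∀ i : Fin r, {v : Fin n | c v = i}.ncard ≤ k}

theorem poly5 {F : Type*} [CommRing F] (h30 : (3:F) = 0) (a b c d : F) :
  (c ^ 2 * d ^ 2 *
              (b ^ 2 * (a - b) ^ 3 * (b - d) ^ 2 + (b - c) * (b * (b - c) * (b - d) - a * (a - c) * (a - d)) ^ 2) +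
            (a - b) ^ 2 * (a - c) ^ 2 * (c - d) * ((a - d) * (b - d) * (c - d) - a * b * c) ^ 2 +
          (a - b) ^ 2 * (a - c) ^ 2 * d ^ 3 * (a - d) ^ 2 * (b - d) ^ 2) =
      (a ^ 2 * b * (a - b) ^ 2 * c * (a - c) * d ^ 2 * (a - d) * (b - d)) := by
  grind

theorem key5 {F : Type*} [Field F] (h30 : (3:F) = 0) (a b c d t k1 k2 k3 k4 : F)
    (ha : a ≠ 0) (hb : b ≠ 0) (hc : c ≠ 0) (hd : d ≠ 0) (hab : a - b ≠ 0) (hac : a - c ≠ 0)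
    (had : a - d ≠ 0) (hbc : b - c ≠ 0) (hbd : b - d ≠ 0) (hcd : c - d ≠ 0)
    (h1 : k1 = t / (a * (a-b)*(a-c)*(a-d)))
    (h2 : k2 = k1 - t / (b * (a-b)*(b-c)*(b-d)))
    (h3 : k3 = k4 + t / (d * (a-d)*(b-d)*(c-d)))
    (h4 : k4 = - t / (a * b * c * d)) :
    ((a-b)^3 * k1^2 + (b-c)^3*k2^2 + (c-d)^3*k3^2+d^3*k4^2) * ((a-c)*(b-d)*c*(a-d)*b) = t^2 := by
  have hp := poly5 h30 a b c d
  have e1 : k1 * (a * (a-b)*(a-c)*(a-d)) = t := by rw [h1]; field_simp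
  have e2 : k2 * (a * (a-b)*(a-c)*(a-d) * b * (b-c)*(b-d)) =
      t * (b * (b - c) * (b - d) - a * (a - c) * (a - d)) := by rw [h2, h1]; field_simp
  have e4 : k4 * (a * b * c * d) = - t := by rw [h4]; field_simp
  have e3 : k3 * (a * b * c * d * (a-d)*(b-d)*(c-d)) =
      -t * ((a - d) * (b - d) * (c - d) - a * b * c) := by rw [h3, h4]; field_simp; ring
  rw [h3, h4, h2, h1]
  field_simp
  clear * - h30
  grind

theorem core5 {F : Type*} [Field F] (h30 : (3:F) = 0) (a b c d k1 k2 k3 k4 : F)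
    (ha : a ≠ 0) (hb : b ≠ 0) (hc : c ≠ 0) (hd : d ≠ 0) (hab : a - b ≠ 0) (hac : a - c ≠ 0)
    (had : a - d ≠ 0) (hbc : b - c ≠ 0) (hbd : b - d ≠ 0) (hcd : c - d ≠ 0) (hk : k1 ≠ 0)
    (h1 : a * k1 + b * (k2 - k1) + c * (k3 - k2) + d * (k4 - k3) = 0)
    (h2 : a^2 * k1 + b^2 * (k2 - k1) + c^2 * (k3 - k2) + d^2 * (k4 - k3) = 0)
    (h3 : a^3 * k1 + b^3 * (k2 - k1) + c^3 * (k3 - k2) + d^3 * (k4 - k3) = 0)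
    (hQ : a^3 * k1^2 + b^3 * (k2^2 - k1^2) + c^3 * (k3^2 - k2^2) + d^3 * (k4^2 - k3^2) = 0) :
    False := by
  have key := key5 h30 a b c d (k1 * (a * (a-b)*(a-c)*(a-d))) k1 k2 k3 k4 ha hb hc hd hab hac had hbc
    hbd hcd (by field_simp) 
    (by
      have : (k2 - k1) * (b * (a-b)*(b-c)*(b-d)) = - (k1 * (a * (a-b)*(a-c)*(a-d))) := by
        linear_combination (a-b) * (h3 - (c+d) * h2 + c * d * h1)
      have h : k2 - k1 = - (k1 * (a * (a-b)*(a-c)*(a-d))) / (b * (a-b)*(b-c)*(b-d)) := by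
        rw [eq_div_iff (by positivity)]; exact this
      rw [neg_div] at h
      linear_combination h) 
    (by
      have : (k4 - k3) * (d * (a-d)*(b-d)*(c-d)) = - (k1 * (a * (a-b)*(a-c)*(a-d))) := by
        linear_combination (a-d) * (h3 - (b+c) * h2 + b * c * h1)
      have h : k4 - k3 = - (k1 * (a * (a-b)*(a-c)*(a-d))) / (d * (a-d)*(b-d)*(c-d)) := by
        rw [eq_div_iff (by positivity)]; exact this
      rw [neg_div] at h
      linear_combination -h) 
    (by
      rw [eq_div_iff (by positivity)]
      linear_combination a * (h3 - (b+c+d)*h2 + (b*c+b*d+c*d) * h1)) 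
  have : (a-b)^3 * k1^2 + (b-c)^3*k2^2 + (c-d)^3*k3^2+d^3*k4^2 = 0 := by
    linear_combination hQ + h30 * ((a*b^2-a^2*b) * k1^2 + (b*c^2-b^2*c) * k2^2 + (c*d^2-c^2*d)*k3^2)
  rw [this, zero_mul] at key
  have : k1 * (a * (a-b)*(a-c)*(a-d)) ≠ 0 := by positivity
  exact this (by simpa using key.symm)

theorem rep5 {F : Type*} [Field F] (a b c d e u1 u2 u3 u4 u5 : F)
    (hab : a ≠ b) (hbc : b ≠ c) (hcd : c ≠ d) (hde : d ≠ e) (hea : e ≠ a)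
    (hu1 : u1 ≠ 0) (hu2 : u2 ≠ 0) (hu3 : u3 ≠ 0) (hu4 : u4 ≠ 0) (hu5 : u5 ≠ 0)
    (h0 : u1 + u2 + u3 + u4 + u5 = 0)
    (h1 : a * u1 + b * u2 + c * u3 + d * u4 + e * u5 = 0)
    (h2 : a^2 * u1 + b^2 * u2 + c^2 * u3 + d^2 * u4 + e^2 * u5 = 0)
    (h3 : a^3 * u1 + b^3 * u2 + c^3 * u3 + d^3 * u4 + e^3 * u5 = 0)
    (hac : a = c) : False := by
  subst hac
  by_cases hbd : b = d
  · subst hbd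
    have : u5 * ((e - a) * (e - b)) = 0 := by
      linear_combination h2 - (a+b) * h1 + a*b*h0
    simp [sub_eq_zero, hu5, hea, hde.symm] at this
  by_cases hbe : b = e
  · subst hbe
    have : u4 * ((d - a) * (d - b)) = 0 := by
      linear_combination h2 - (a+b) * h1 + a*b*h0
    simp [sub_eq_zero, hu4, hcd.symm, hde] at this
  have : u2 * ((b - a) * (b - d) * (b - e)) = 0 := by
    linear_combination h3 - (a+d+e) * h2 + (a*d+a*e+d*e)*h1 - a*d*e*h0
  simp [sub_eq_zero, hu2, hab.symm, hbd, hbe] at this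

theorem alg5 {F : Type*} [Field F] (h30 : (3:F) = 0) (a b c d e k1 k2 k3 k4 k5 : F)
    (hab : a ≠ b) (hbc : b ≠ c) (hcd : c ≠ d) (hde : d ≠ e) (hea : e ≠ a)
    (hu1 : k5 ≠ k1) (hu2 : k1 ≠ k2) (hu3 : k2 ≠ k3) (hu4 : k3 ≠ k4) (hu5 : k4 ≠ k5)
    (h1 : a * (k1-k5) + b * (k2-k1) + c * (k3-k2) + d * (k4-k3) + e * (k5-k4) = 0)
    (h2 : a^2 * (k1-k5) + b^2 * (k2-k1) + c^2 * (k3-k2) + d^2 * (k4-k3) + e^2 * (k5-k4) = 0)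
    (h3 : a^3 * (k1-k5) + b^3 * (k2-k1) + c^3 * (k3-k2) + d^3 * (k4-k3) + e^3 * (k5-k4) = 0)
    (hQ : a^3 * (k1^2-k5^2) + b^3 * (k2^2-k1^2) + c^3 * (k3^2-k2^2) + d^3 * (k4^2-k3^2)
      + e^3 * (k5^2-k4^2) = 0) : False := by
  have v1 : k1 - k5 ≠ 0 := sub_ne_zero.2 hu1.symm
  have v2 : k2 - k1 ≠ 0 := sub_ne_zero.2 hu2.symm
  have v3 : k3 - k2 ≠ 0 := sub_ne_zero.2 hu3.symm
  have v4 : k4 - k3 ≠ 0 := sub_ne_zero.2 hu4.symm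
  have v5 : k5 - k4 ≠ 0 := sub_ne_zero.2 hu5.symm
  have hac : a ≠ c := fun h => rep5 a b c d e _ _ _ _ _ hab hbc hcd hde hea v1 v2 v3 v4 v5
    (by ring) (by linear_combination h1) (by linear_combination h2) (by linear_combination h3) h
  have hbd : b ≠ d := fun h => rep5 b c d e a _ _ _ _ _ hbc hcd hde hea hab v2 v3 v4 v5 v1
    (by ring) (by linear_combination h1) (by linear_combination h2) (by linear_combination h3) h
  have hce : c ≠ e := fun h => rep5 c d e a b _ _ _ _ _ hcd hde hea hab hbc v3 v4 v5 v1 v2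
    (by ring) (by linear_combination h1) (by linear_combination h2) (by linear_combination h3) h
  have hda : d ≠ a := fun h => rep5 d e a b c _ _ _ _ _ hde hea hab hbc hcd v4 v5 v1 v2 v3
    (by ring) (by linear_combination h1) (by linear_combination h2) (by linear_combination h3) h
  have heb : e ≠ b := fun h => rep5 e a b c d _ _ _ _ _ hea hab hbc hcd hde v5 v1 v2 v3 v4
    (by ring) (by linear_combination h1) (by linear_combination h2) (by linear_combination h3) h
  have s : ∀ {x y z : F}, x ≠ y → (x - z) - (y - z) ≠ 0 := fun h => by
    simpa [sub_eq_zero] using h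
  refine core5 h30 (a-e) (b-e) (c-e) (d-e) (k1-k5) (k2-k5) (k3-k5) (k4-k5) (sub_ne_zero.2 hea.symm)
    (sub_ne_zero.2 heb.symm) (sub_ne_zero.2 hce) (sub_ne_zero.2 hde) (s hab) (s hac) (s hda.symm)
    (s hbc) (s hbd) (s hcd) v1 ?_ ?_ ?_ ?_
  · linear_combination h1
  · linear_combination h2 - 2 * e * h1
  · linear_combination h3 - 3 * e * h2 + 3 * e^2 * h1
  · linear_combination hQ - 2 * k5 * h3 + h30 * (
      (-a^2*e + a*e^2) * ((k1-k5)^2) + (-b^2*e+b*e^2) * ((k2-k5)^2-(k1-k5)^2)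
      + (-c^2*e+c*e^2) * ((k3-k5)^2-(k2-k5)^2) + (-d^2*e+d*e^2) * ((k4-k5)^2-(k3-k5)^2))

theorem alg4 {F : Type*} [Field F] (h30 : (3:F) = 0) (a b c d k1 k2 k3 k4 : F)
    (hab : a ≠ b) (hbc : b ≠ c) (hcd : c ≠ d) (hda : d ≠ a)
    (hu1 : k4 ≠ k1) (hu2 : k1 ≠ k2) (hu3 : k2 ≠ k3) (hu4 : k3 ≠ k4)
    (h1 : a * (k1-k4) + b * (k2-k1) + c * (k3-k2) + d * (k4-k3) = 0)
    (h2 : a^2 * (k1-k4) + b^2 * (k2-k1) + c^2 * (k3-k2) + d^2 * (k4-k3) = 0)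
    (h3 : a^3 * (k1-k4) + b^3 * (k2-k1) + c^3 * (k3-k2) + d^3 * (k4-k3) = 0)
    (hQ : a^3 * (k1^2-k4^2) + b^3 * (k2^2-k1^2) + c^3 * (k3^2-k2^2) + d^3 * (k4^2-k3^2) = 0) :
    False := by
  have v1 : k1 - k4 ≠ 0 := sub_ne_zero.2 hu1.symm
  have v2 : k2 - k1 ≠ 0 := sub_ne_zero.2 hu2.symm
  by_cases hac : a = c
  · subst hac
    by_cases hbd : b = d
    · subst hbd
      have e1 : (a - b) * (k1 - k2 + k3 - k4) = 0 := by linear_combination h1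
      have e2 : (a - b)^3 * (k1^2 - k2^2 + k3^2 - k4^2) = 0 := by
        linear_combination hQ + h30 * (-a^2*b+a*b^2) * (k1^2 - k2^2 + k3^2 - k4^2)
      have e1 := (mul_eq_zero.1 e1).resolve_left (sub_ne_zero.2 hab)
      have e2 := (mul_eq_zero.1 e2).resolve_left (pow_ne_zero _ (sub_ne_zero.2 hab))
      have : (k1 - k4) * (k2 - k1) = 0 := by
        have hk : k3 = k2 + k4 - k1 := by linear_combination e1
        rw [hk] at e2
        linear_combination e2 + h30 * ((k1 - k4) * (k2 - k1))
      exact (mul_ne_zero v1 v2) this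
    · have : (k2-k1) * ((b - a) * (b - d)) = 0 := by
        linear_combination h2 - (a+d) * h1
      simp [v2, sub_eq_zero, hab.symm, hbd] at this
  · have : (k1 - k4) * ((a - b) * (a-c) * (a - d)) = 0 := by
      linear_combination h3 - (b+c+d) * h2 + (b*c+b*d+c*d)*h1
    simp [v1, sub_eq_zero, hab, hac, hda.symm] at this

theorem alg3 {F : Type*} [Field F] (a b c k1 k2 k3 : F)
    (hab : a ≠ b) (hca : c ≠ a) (hu1 : k3 ≠ k1) 
    (h1 : a * (k1-k3) + b * (k2-k1) + c * (k3-k2) = 0)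
    (h2 : a^2 * (k1-k3) + b^2 * (k2-k1) + c^2 * (k3-k2) = 0) : False := by
  have v1 : k1 - k3 ≠ 0 := sub_ne_zero.2 hu1.symm
  have : (k1 - k3) * ((a - b) * (a-c)) = 0 := by
      linear_combination h2 - (b+c) * h1
  simp [v1, sub_eq_zero, hab, hca.symm] at this

theorem alg2 {F : Type*} [Field F] (a b k1 k2 : F)
    (hab : a ≠ b) (hu1 : k2 ≠ k1) 
    (h1 : a * (k1-k2) + b * (k2-k1) = 0) : False := by
  have v1 : k1 - k2 ≠ 0 := sub_ne_zero.2 hu1.symm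
  have : (k1 - k2) * (a - b) = 0 := by linear_combination h1
  simp [v1, sub_eq_zero, hab] at this

def PRel {F : Type*} [Field F] (θ : F →+* F) (x y : Fin 5 → F) : Prop :=
  y 4 = θ (x 0) * y 0 + x 1 ∧ x 4 = θ (y 0) * x 0 + y 1 ∧
  y 3 = x 0 ^ 2 * θ (y 0) + x 2 + x 0 * x 4 ∧ x 3 = y 0 ^ 2 * θ (x 0) + y 2 + y 0 * y 4

theorem PRel.symm' {F : Type*} [Field F] {θ : F →+* F} {x y : Fin 5 → F} (h : PRel θ x y) :
    PRel θ y x := ⟨h.2.1, h.1, h.2.2.2, h.2.2.1⟩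

theorem PRel.s4 {F : Type*} [Field F] {θ : F →+* F} {x y x' : Fin 5 → F} (h : PRel θ x y)
    (h' : PRel θ y x') : θ (y 0) * (x' 0 - x 0) = x' 4 - x 4 := by
  obtain ⟨_, a2, _, _⟩ := h
  obtain ⟨b1, _, _, _⟩ := h'
  linear_combination a2 - b1

theorem PRel.s2 {F : Type*} [Field F] {θ : F →+* F} {x y x' : Fin 5 → F} (h : PRel θ x y)
    (h' : PRel θ y x') : θ (y 0) * (x' 0 ^ 2 - x 0 ^ 2) =
      -(x' 2 + x' 0 * x' 4) + (x 2 + x 0 * x 4) := by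
  obtain ⟨_, _, a3, _⟩ := h
  obtain ⟨_, _, _, b4⟩ := h'
  linear_combination a3 - b4

theorem PRel.ne {F : Type*} [Field F] {θ : F →+* F} {x y x' : Fin 5 → F} (h : PRel θ x y)
    (h' : PRel θ y x') (hne : x ≠ x') : x 0 ≠ x' 0 := by
  intro h0
  have e4 := h.s4 h'
  have e2 := h.s2 h'
  rw [h0] at e4 e2
  have e4 : x 4 = x' 4 := by linear_combination e4
  rw [e4] at e2
  have e2 : x 2 = x' 2 := by linear_combination -e2
  obtain ⟨a1, a2, a3, a4⟩ := h
  obtain ⟨b1, b2, b3, b4⟩ := h'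
  apply hne
  funext i
  fin_cases i
  · exact h0
  · show x 1 = x' 1
    rw [h0] at a1
    linear_combination b2 - a1
  · exact e2
  · show x 3 = x' 3
    rw [h0] at a4
    linear_combination a4 - b3
  · exact e4

section
variable {F : Type*} [Field F] {θ : F →+* F}

theorem cyc10 (h30 : (3:F) = 0) (hθ : ∀ x, θ (θ x) = x ^ 3)
    (v0 v1 v2 v3 v4 v5 v6 v7 v8 v9 : Fin 5 → F)
    (r0 : PRel θ v0 v1) (r1 : PRel θ v1 v2) (r2 : PRel θ v2 v3) (r3 : PRel θ v3 v4)
    (r4 : PRel θ v4 v5) (r5 : PRel θ v5 v6) (r6 : PRel θ v6 v7) (r7 : PRel θ v7 v8)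
    (r8 : PRel θ v8 v9) (r9 : PRel θ v9 v0)
    (n0 : v0 ≠ v2) (n1 : v1 ≠ v3) (n2 : v2 ≠ v4) (n3 : v3 ≠ v5) (n4 : v4 ≠ v6)
    (n5 : v5 ≠ v7) (n6 : v6 ≠ v8) (n7 : v7 ≠ v9) (n8 : v8 ≠ v0) (n9 : v9 ≠ v1) : False := by
  have hi : Function.Injective θ := θ.injective
  refine alg5 h30 (v0 0) (v2 0) (v4 0) (v6 0) (v8 0) (θ (v1 0)) (θ (v3 0)) (θ (v5 0)) (θ (v7 0))
    (θ (v9 0)) (r0.ne r1 n0) (r2.ne r3 n2) (r4.ne r5 n4) (r6.ne r7 n6) (r8.ne r9 n8)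
    (hi.ne (r9.ne r0 n9)) (hi.ne (r1.ne r2 n1)) (hi.ne (r3.ne r4 n3)) (hi.ne (r5.ne r6 n5))
    (hi.ne (r7.ne r8 n7)) ?_ ?_ ?_ ?_
  · linear_combination -(r0.s4 r1 + r2.s4 r3 + r4.s4 r5 + r6.s4 r7 + r8.s4 r9)
  · linear_combination -(r0.s2 r1 + r2.s2 r3 + r4.s2 r5 + r6.s2 r7 + r8.s2 r9)
  · have := congrArg θ (show θ (v0 0) * (v1 0 - v9 0) + θ (v2 0) * (v3 0 - v1 0)
      + θ (v4 0) * (v5 0 - v3 0) + θ (v6 0) * (v7 0 - v5 0) + θ (v8 0) * (v9 0 - v7 0) = 0 by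
        linear_combination r9.s4 r0 + r1.s4 r2 + r3.s4 r4 + r5.s4 r6 + r7.s4 r8)
    simpa [hθ] using this
  · have := congrArg θ (show θ (v0 0) * (v1 0 ^ 2 - v9 0 ^ 2) + θ (v2 0) * (v3 0 ^ 2 - v1 0 ^ 2)
      + θ (v4 0) * (v5 0 ^ 2 - v3 0 ^ 2) + θ (v6 0) * (v7 0 ^ 2 - v5 0 ^ 2)
      + θ (v8 0) * (v9 0 ^ 2 - v7 0 ^ 2) = 0 by
        linear_combination r9.s2 r0 + r1.s2 r2 + r3.s2 r4 + r5.s2 r6 + r7.s2 r8)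
    simpa [hθ] using this

theorem cyc8 (h30 : (3:F) = 0) (hθ : ∀ x, θ (θ x) = x ^ 3)
    (v0 v1 v2 v3 v4 v5 v6 v7 : Fin 5 → F)
    (r0 : PRel θ v0 v1) (r1 : PRel θ v1 v2) (r2 : PRel θ v2 v3) (r3 : PRel θ v3 v4)
    (r4 : PRel θ v4 v5) (r5 : PRel θ v5 v6) (r6 : PRel θ v6 v7) (r7 : PRel θ v7 v0)
    (n0 : v0 ≠ v2) (n1 : v1 ≠ v3) (n2 : v2 ≠ v4) (n3 : v3 ≠ v5) (n4 : v4 ≠ v6)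
    (n5 : v5 ≠ v7) (n6 : v6 ≠ v0) (n7 : v7 ≠ v1) : False := by
  have hi : Function.Injective θ := θ.injective
  refine alg4 h30 (v0 0) (v2 0) (v4 0) (v6 0) (θ (v1 0)) (θ (v3 0)) (θ (v5 0)) (θ (v7 0))
    (r0.ne r1 n0) (r2.ne r3 n2) (r4.ne r5 n4) (r6.ne r7 n6)
    (hi.ne (r7.ne r0 n7)) (hi.ne (r1.ne r2 n1)) (hi.ne (r3.ne r4 n3)) (hi.ne (r5.ne r6 n5))
    ?_ ?_ ?_ ?_
  · linear_combination -(r0.s4 r1 + r2.s4 r3 + r4.s4 r5 + r6.s4 r7)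
  · linear_combination -(r0.s2 r1 + r2.s2 r3 + r4.s2 r5 + r6.s2 r7)
  · have := congrArg θ (show θ (v0 0) * (v1 0 - v7 0) + θ (v2 0) * (v3 0 - v1 0)
      + θ (v4 0) * (v5 0 - v3 0) + θ (v6 0) * (v7 0 - v5 0) = 0 by
        linear_combination r7.s4 r0 + r1.s4 r2 + r3.s4 r4 + r5.s4 r6)
    simpa [hθ] using this
  · have := congrArg θ (show θ (v0 0) * (v1 0 ^ 2 - v7 0 ^ 2) + θ (v2 0) * (v3 0 ^ 2 - v1 0 ^ 2)
      + θ (v4 0) * (v5 0 ^ 2 - v3 0 ^ 2) + θ (v6 0) * (v7 0 ^ 2 - v5 0 ^ 2) = 0 by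
        linear_combination r7.s2 r0 + r1.s2 r2 + r3.s2 r4 + r5.s2 r6)
    simpa [hθ] using this

theorem cyc6 (v0 v1 v2 v3 v4 v5 : Fin 5 → F)
    (r0 : PRel θ v0 v1) (r1 : PRel θ v1 v2) (r2 : PRel θ v2 v3) (r3 : PRel θ v3 v4)
    (r4 : PRel θ v4 v5) (r5 : PRel θ v5 v0)
    (n0 : v0 ≠ v2) (n4 : v4 ≠ v0) (n5 : v5 ≠ v1) : False := by
  have hi : Function.Injective θ := θ.injective
  refine alg3 (v0 0) (v2 0) (v4 0) (θ (v1 0)) (θ (v3 0)) (θ (v5 0))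
    (r0.ne r1 n0) (r4.ne r5 n4) (hi.ne (r5.ne r0 n5)) ?_ ?_
  · linear_combination -(r0.s4 r1 + r2.s4 r3 + r4.s4 r5)
  · linear_combination -(r0.s2 r1 + r2.s2 r3 + r4.s2 r5)

theorem cyc4 (v0 v1 v2 v3 : Fin 5 → F)
    (r0 : PRel θ v0 v1) (r1 : PRel θ v1 v2) (r2 : PRel θ v2 v3) (r3 : PRel θ v3 v0)
    (n0 : v0 ≠ v2) (n3 : v3 ≠ v1) : False := by
  have hi : Function.Injective θ := θ.injective
  refine alg2 (v0 0) (v2 0) (θ (v1 0)) (θ (v3 0)) (r0.ne r1 n0) (hi.ne (r3.ne r0 n3)) ?_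
  linear_combination -(r0.s4 r1 + r2.s4 r3)
end

theorem copy_adj {N : ℕ} (hN : 1 < N) {V : Type*} {G : SimpleGraph V}
    (f : cycGraph N →g G) (i : ZMod N) : G.Adj (f i) (f (i + 1)) := by
  apply f.map_adj
  have : Fact (1 < N) := ⟨hN⟩
  simp [cycGraph, SimpleGraph.fromRel_adj]

/-- the polarity graph, transported along an equivalence -/
def polG {F : Type*} [Field F] (θ : F →+* F) {n : ℕ} (φ : Fin n ≃ (Fin 5 → F)) :
    SimpleGraph (Fin n) where
  Adj u v := u ≠ v ∧ PRel θ (φ u) (φ v)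
  symm := ⟨fun _ _ h => ⟨h.1.symm, h.2.symm'⟩⟩
  loopless := ⟨fun _ h => h.1 rfl⟩

theorem upper (e : ℕ) : ∃ (n : ℕ) (G : SimpleGraph (Fin n)),
    ¬ ContainsCopy (cycGraph 4) G ∧ ¬ ContainsCopy (cycGraph 6) G ∧
    ¬ ContainsCopy (cycGraph 8) G ∧ ¬ ContainsCopy (cycGraph 10) G ∧
    ∃ c : Fin n → Fin (3 ^ (3 * (2 * e + 1))), IsCompletePartition G c ∧
      ∀ i, {v : Fin n | c v = i}.ncard ≤ 3 ^ (2 * (2 * e + 1)) := by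
  have : Fact (Nat.Prime 3) := ⟨Nat.prime_three⟩
  let F := GaloisField 3 (2 * e + 1)
  have : Fintype F := Fintype.ofFinite F
  have hc : Nat.card F = 3 ^ (2 * e + 1) := GaloisField.card 3 _ (by omega)
  have hc' : Fintype.card F = 3 ^ (2 * e + 1) := by rw [← hc, Nat.card_eq_fintype_card]
  have h30 : (3:F) = 0 := by exact_mod_cast CharP.cast_eq_zero F 3
  let θ : F →+* F := iterateFrobenius F 3 (e + 1)
  have hθ : ∀ x, θ (θ x) = x ^ 3 := by
    intro x
    simp only [θ, iterateFrobenius_def]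
    rw [← pow_mul, ← pow_add, show e + 1 + (e + 1) = (2 * e + 1) + 1 by ring, pow_succ, pow_mul,
      ← hc', FiniteField.pow_card]
  obtain ⟨φ⟩ : Nonempty (Fin ((3 ^ (2 * e + 1)) ^ 5) ≃ (Fin 5 → F)) := by
    apply Fintype.card_eq.1; simp [hc']
  obtain ⟨ψ⟩ : Nonempty ((Fin 3 → F) ≃ Fin (3 ^ (3 * (2 * e + 1)))) := by
    apply Fintype.card_eq.1; simp only [Fintype.card_fun, Fintype.card_fin, hc']
    rw [← pow_mul, mul_comm]
  refine ⟨_, polG θ φ, ?_, ?_, ?_, ?_, fun v => ψ ![φ v 0, φ v 1, φ v 2], ?_, ?_⟩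
  · rintro ⟨f, hf⟩
    have ha := fun i => (copy_adj (by norm_num) f i).2
    have hn : ∀ i j, i ≠ j → φ (f i) ≠ φ (f j) := fun i j h => (φ.injective.comp hf).ne h
    exact cyc4 _ _ _ _ (ha 0) (ha 1) (ha 2) (ha 3) (hn _ _ (by decide)) (hn _ _ (by decide))
  · rintro ⟨f, hf⟩
    have ha := fun i => (copy_adj (by norm_num) f i).2
    have hn : ∀ i j, i ≠ j → φ (f i) ≠ φ (f j) := fun i j h => (φ.injective.comp hf).ne h
    exact cyc6 _ _ _ _ _ _ (ha 0) (ha 1) (ha 2) (ha 3) (ha 4) (ha 5) (hn _ _ (by decide))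
      (hn _ _ (by decide)) (hn _ _ (by decide))
  · rintro ⟨f, hf⟩
    have ha := fun i => (copy_adj (by norm_num) f i).2
    have hn : ∀ i j, i ≠ j → φ (f i) ≠ φ (f j) := fun i j h => (φ.injective.comp hf).ne h
    apply cyc8 h30 hθ _ _ _ _ _ _ _ _ (ha 0) (ha 1) (ha 2) (ha 3) (ha 4) (ha 5) (ha 6) (ha 7) <;>
      exact hn _ _ (by decide)
  · rintro ⟨f, hf⟩
    have ha := fun i => (copy_adj (by norm_num) f i).2
    have hn : ∀ i j, i ≠ j → φ (f i) ≠ φ (f j) := fun i j h => (φ.injective.comp hf).ne h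
    apply cyc10 h30 hθ _ _ _ _ _ _ _ _ _ _ (ha 0) (ha 1) (ha 2) (ha 3) (ha 4) (ha 5) (ha 6) (ha 7)
      (ha 8) (ha 9) <;>
      exact hn _ _ (by decide)
  · intro i j hij
    obtain ⟨x, rfl⟩ := ψ.surjective i
    obtain ⟨y, rfl⟩ := ψ.surjective j
    let E := θ (x 0) * y 0 + x 1
    let e' := θ (y 0) * x 0 + y 1
    let X : Fin 5 → F := ![x 0, x 1, x 2, y 0 ^ 2 * θ (x 0) + y 2 + y 0 * E, e']
    let Y : Fin 5 → F := ![y 0, y 1, y 2, x 0 ^ 2 * θ (y 0) + x 2 + x 0 * e', E]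
    have hX : ψ ![φ (φ.symm X) 0, φ (φ.symm X) 1, φ (φ.symm X) 2] = ψ x := by
      congr 1; funext i; fin_cases i <;> simp [X]
    have hY : ψ ![φ (φ.symm Y) 0, φ (φ.symm Y) 1, φ (φ.symm Y) 2] = ψ y := by
      congr 1; funext i; fin_cases i <;> simp [Y]
    refine ⟨φ.symm X, φ.symm Y, hX, hY, ?_, ?_⟩
    · intro h
      apply hij
      rw [← hX, ← hY, h]
    · rw [Equiv.apply_symm_apply, Equiv.apply_symm_apply]
      exact ⟨rfl, rfl, rfl, rfl⟩
  · intro i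
    have : 3 ^ (2 * (2 * e + 1)) = (Set.univ : Set (F × F)).ncard := by
      rw [Set.ncard_univ, Nat.card_prod, hc]; ring
    rw [this]
    apply Set.ncard_le_ncard_of_injOn (fun v => (φ v 3, φ v 4)) (by simp) _ (Set.toFinite _)
    intro u hu v hv huv
    have h1 : ψ ![φ u 0, φ u 1, φ u 2] = ψ ![φ v 0, φ v 1, φ v 2] := hu.trans hv.symm
    have h1 := ψ.injective h1
    have a0 := congrFun h1 0
    have a1 := congrFun h1 1
    have a2 := congrFun h1 2
    simp at a0 a1 a2 huv
    apply φ.injective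
    funext i
    fin_cases i
    exacts [a0, a1, a2, huv.1, huv.2]

theorem copy_of_path {V : Type*} {G : SimpleGraph V} {x z : V} (q : G.Walk x z) (hq : q.IsPath)
    (h : G.Adj z x) {N : ℕ} (hN : q.length + 1 = N) (hN2 : 2 < N) : ContainsCopy (cycGraph N) G := by
  have : NeZero N := ⟨by omega⟩
  have : Fact (1 < N) := ⟨by omega⟩
  have key : ∀ i : ZMod N, G.Adj (q.getVert i.val) (q.getVert (i + 1).val) := by
    intro i
    have hi := ZMod.val_lt i
    by_cases hlt : i.val + 1 < N
    · rw [ZMod.val_add, ZMod.val_one, Nat.mod_eq_of_lt hlt]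
      exact q.adj_getVert_succ (by omega)
    · have h1 : i.val = q.length := by omega
      have h2 : i + 1 = 0 := by
        have : ((i.val + 1 : ℕ) : ZMod N) = 0 := by
          rw [show i.val + 1 = N by omega]; simp
        simpa using this
      rw [h2, h1, ZMod.val_zero, q.getVert_length, q.getVert_zero]
      exact h
  refine ⟨⟨fun i => q.getVert i.val, ?_⟩, ?_⟩
  · intro i j hij
    simp only [cycGraph, SimpleGraph.fromRel_adj] at hij
    rcases hij.2 with rfl | rfl
    · exact key i
    · exact (key j).symm
  · intro i j hij
    have hi := ZMod.val_lt i
    have hj := ZMod.val_lt j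
    apply ZMod.val_injective N
    exact hq.getVert_injOn (by simp; omega) (by simp; omega) hij

theorem exists_parent {V : Type*} {G : SimpleGraph V} {u y : V} {j : ℕ} (h : G.dist u y = j + 1) :
    ∃ y', G.Adj y y' ∧ G.dist u y' = j ∧ G.Reachable u y' := by
  have hr : G.Reachable u y := SimpleGraph.Reachable.of_dist_ne_zero (by omega)
  obtain ⟨p, hp⟩ := hr.exists_walk_length_eq_dist
  have hl : p.reverse.length = j + 1 := by simp [hp, h]
  generalize p.reverse = q at hl
  cases q with
  | nil => simp at hl
  | @cons _ y' _ hadj q' =>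
    simp at hl
    have h1 : G.dist u y' ≤ j := by
      have := SimpleGraph.dist_le q'.reverse
      simpa [hl] using this
    have hr' : G.Reachable u y' := q'.reachable.symm
    refine ⟨y', hadj, ?_, hr'⟩
    obtain ⟨p', hp'⟩ := hr'.exists_walk_length_eq_dist
    have := SimpleGraph.dist_le (p'.concat hadj.symm)
    rw [SimpleGraph.Walk.length_concat] at this
    omega

theorem even_path {V : Type*} {G : SimpleGraph V} (u : V) (j : ℕ) : ∀ y z : V, y ≠ z →
    G.Reachable u y → G.Reachable u z → G.dist u y = j → G.dist u z = j →
    ∃ m, 1 ≤ m ∧ m ≤ j ∧ ∃ p : G.Walk y z, p.IsPath ∧ p.length = 2 * m ∧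
      ∀ x ∈ p.support, x = y ∨ x = z ∨ G.dist u x < j := by
  induction j with
  | zero =>
    intro y z hne hy hz h1 h2
    rw [hy.dist_eq_zero_iff] at h1
    rw [hz.dist_eq_zero_iff] at h2
    exact absurd (h1.symm.trans h2) hne
  | succ j ih =>
    intro y z hne hy hz h1 h2
    obtain ⟨y', ay, dy, ry⟩ := exists_parent h1
    obtain ⟨z', az, dz, rz⟩ := exists_parent h2
    by_cases h : y' = z'
    · subst h
      refine ⟨1, le_rfl, by omega, .cons ay (.cons az.symm .nil), ?_, by simp, ?_⟩
      · simp [SimpleGraph.Walk.isPath_def, hne, ay.ne, az.ne.symm]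
      · intro x hx
        simp at hx
        rcases hx with rfl | rfl | rfl
        · simp
        · right; right; omega
        · simp
    · obtain ⟨m, hm1, hm2, p, hp, hl, hs⟩ := ih y' z' h ry rz dy dz
      have hlt : ∀ x ∈ p.support, G.dist u x < j + 1 := by
        intro x hx
        rcases hs x hx with rfl | rfl | h <;> omega
      have hyn : y ∉ p.support := fun hh => by have := hlt y hh; omega
      have hzn : z ∉ p.support := fun hh => by have := hlt z hh; omega
      refine ⟨m + 1, by omega, by omega, .cons ay (p.concat az.symm), ?_, ?_, ?_⟩
      · rw [SimpleGraph.Walk.cons_isPath_iff]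
        refine ⟨hp.concat hzn az.symm, ?_⟩
        rw [SimpleGraph.Walk.support_concat]
        simp [hyn, hne]
      · simp [hl]; ring
      · intro x hx
        rw [SimpleGraph.Walk.support_cons, SimpleGraph.Walk.support_concat] at hx
        simp at hx
        rcases hx with rfl | hx | rfl
        · simp
        · exact Or.inr (Or.inr (hlt x hx))
        · simp

def EvenFree {V : Type*} (G : SimpleGraph V) : Prop :=
  ¬ ContainsCopy (cycGraph 4) G ∧ ¬ ContainsCopy (cycGraph 6) G ∧
    ¬ ContainsCopy (cycGraph 8) G ∧ ¬ ContainsCopy (cycGraph 10) G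

theorem no_common {V : Type*} {G : SimpleGraph V} (hG : EvenFree G) {u x y z : V} {j : ℕ}
    (hj : j ≤ 4) (hx : G.Reachable u x) (hxj : j ≤ G.dist u x) (ay : G.Adj x y) (az : G.Adj x z)
    (hy : G.dist u y = j) (hz : G.dist u z = j) : y = z := by
  by_contra hne
  obtain ⟨m, hm1, hm2, p, hp, hl, hs⟩ := even_path u j y z hne (hx.trans ay.reachable)
    (hx.trans az.reachable) hy hz
  have hxn : x ∉ p.support := by
    intro h
    rcases hs x h with h | h | h
    · exact ay.ne h
    · exact az.ne h
    · omega
  have hc : (SimpleGraph.Walk.cons ay p).IsPath := by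
    rw [SimpleGraph.Walk.cons_isPath_iff]; exact ⟨hp, hxn⟩
  have := fun N h1 h2 => copy_of_path (N := N) _ hc az.symm h1 h2
  simp only [SimpleGraph.Walk.length_cons, hl] at this
  obtain ⟨g1, g2, g3, g4⟩ := hG
  have : m = 1 ∨ m = 2 ∨ m = 3 ∨ m = 4 := by omega
  rcases this with rfl | rfl | rfl | rfl
  · exact g1 (this 4 rfl (by omega))
  · exact g2 (this 6 rfl (by omega))
  · exact g3 (this 8 rfl (by omega))
  · exact g4 (this 10 rfl (by omega))

theorem dist_step {V : Type*} {G : SimpleGraph V} {u x y : V} (hx : G.Reachable u x)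
    (h : G.Adj x y) : G.dist u y ≤ G.dist u x + 1 := by
  obtain ⟨p, hp⟩ := hx.exists_walk_length_eq_dist
  have := SimpleGraph.dist_le (p.concat h)
  rwa [SimpleGraph.Walk.length_concat, hp] at this

section count
open Classical
open Finset

set_option linter.unusedSectionVars false
variable {V : Type*} [Fintype V] (G : SimpleGraph V)

noncomputable def AA (x y : V) : ℝ := if G.Adj x y then 1 else 0
noncomputable def DD (x : V) : ℝ := ∑ y, AA G x y
noncomputable def BB (j : ℕ) (u x y : V) : ℝ := if G.Adj x y ∧ G.dist u y = j + 1 then 1 else 0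
noncomputable def KK (j : ℕ) (w : V → ℝ) (f : V → V → ℝ) (u y : V) : ℝ :=
  ∑ x, f u x * w x * BB G j u x y
noncomputable def tot (f : V → V → ℝ) : ℝ := ∑ u, ∑ y, f u y

theorem AA_nonneg (x y : V) : 0 ≤ AA G x y := by unfold AA; split_ifs <;> norm_num
theorem BB_nonneg (j : ℕ) (u x y : V) : 0 ≤ BB G j u x y := by unfold BB; split_ifs <;> norm_num
theorem BB_le (j : ℕ) (u x y : V) : BB G j u x y ≤ AA G x y := by
  unfold BB AA; split_ifs <;> simp_all
theorem AA_comm (x y : V) : AA G x y = AA G y x := by unfold AA; simp [G.adj_comm]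
theorem DD_nonneg (x : V) : 0 ≤ DD G x := sum_nonneg fun _ _ => AA_nonneg G _ _
theorem sumBB_le (j : ℕ) (u x : V) : ∑ y, BB G j u x y ≤ DD G x :=
  sum_le_sum fun _ _ => BB_le G _ _ _ _

theorem tot_KK (j : ℕ) (w : V → ℝ) (f : V → V → ℝ) :
    tot (KK G j w f) = ∑ x, ∑ u, f u x * w x * ∑ y, BB G j u x y := by
  unfold tot KK
  rw [sum_comm (s := univ) (t := univ) (f := fun x u => f u x * w x * ∑ y, BB G j u x y)]
  refine sum_congr rfl fun u _ => ?_
  rw [sum_comm]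
  refine sum_congr rfl fun x _ => ?_
  rw [mul_sum]

theorem KK_nonneg (j : ℕ) {w : V → ℝ} (hw : ∀ x, 0 ≤ w x) {f : V → V → ℝ} (hf : ∀ u x, 0 ≤ f u x) :
    ∀ u x, 0 ≤ KK G j w f u x :=
  fun _ _ => sum_nonneg fun _ _ => mul_nonneg (mul_nonneg (hf _ _) (hw _)) (BB_nonneg G _ _ _ _)

theorem col_KK (j : ℕ) {f : V → V → ℝ} (hf : ∀ u x, 0 ≤ f u x)
    (hc : ∀ x, ∑ u, f u x ≤ DD G x) (y : V) :
    ∑ u, KK G j (fun x => (DD G x)⁻¹) f u y ≤ DD G y := by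
  unfold KK
  rw [sum_comm]
  unfold DD at *
  refine sum_le_sum fun x _ => ?_
  calc ∑ u, f u x * (∑ y, AA G x y)⁻¹ * BB G j u x y
      ≤ ∑ u, f u x * (∑ y, AA G x y)⁻¹ * AA G x y := by
        refine sum_le_sum fun u _ => mul_le_mul_of_nonneg_left (BB_le G _ _ _ _)
          (mul_nonneg (hf _ _) (inv_nonneg.2 (DD_nonneg G x)))
    _ = (∑ u, f u x) * ((∑ y, AA G x y)⁻¹ * AA G x y) := by
        rw [sum_mul]; exact sum_congr rfl fun _ _ => by ring
    _ ≤ (∑ y, AA G x y) * ((∑ y, AA G x y)⁻¹ * AA G x y) :=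
        mul_le_mul_of_nonneg_right (hc x)
          (mul_nonneg (inv_nonneg.2 (DD_nonneg G x)) (AA_nonneg G _ _))
    _ ≤ 1 * AA G x y := by
        rw [← mul_assoc]
        exact mul_le_mul_of_nonneg_right (mul_inv_le_one) (AA_nonneg G _ _)
    _ = AA G y x := by rw [one_mul, AA_comm]

theorem tot_KK_le (j : ℕ) {f : V → V → ℝ} (hf : ∀ u x, 0 ≤ f u x) :
    tot (KK G j (fun x => (DD G x)⁻¹) f) ≤ tot f := by
  rw [tot_KK]
  unfold tot
  rw [sum_comm (f := fun u y => f u y)]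
  refine sum_le_sum fun x _ => sum_le_sum fun u _ => ?_
  rw [mul_assoc]
  have : (DD G x)⁻¹ * ∑ y, BB G j u x y ≤ 1 :=
    (mul_le_mul_of_nonneg_left (sumBB_le G j u x) (inv_nonneg.2 (DD_nonneg G x))).trans
      inv_mul_le_one
  exact mul_le_of_le_one_right (hf u x) this

theorem tot_inv_le {f : V → V → ℝ}
    (hc : ∀ x, ∑ u, f u x ≤ DD G x) : ∑ x, ∑ u, f u x * (DD G x)⁻¹ ≤ Fintype.card V := by
  calc ∑ x, ∑ u, f u x * (DD G x)⁻¹ ≤ ∑ x : V, (1:ℝ) := by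
        refine sum_le_sum fun x _ => ?_
        rw [← sum_mul]
        exact (mul_le_mul_of_nonneg_right (hc x) (inv_nonneg.2 (DD_nonneg G x))).trans mul_inv_le_one
    _ = _ := by simp

theorem tot_KK2_le (j : ℕ) {f : V → V → ℝ} (hf : ∀ u x, 0 ≤ f u x)
    (hc : ∀ x, ∑ u, f u x ≤ DD G x) :
    tot (KK G j (fun x => (DD G x)⁻¹ ^ 2) f) ≤ Fintype.card V := by
  rw [tot_KK]
  refine le_trans (sum_le_sum fun x _ => sum_le_sum fun u _ => ?_) (tot_inv_le G hc)
  have : (DD G x)⁻¹ * ∑ y, BB G j u x y ≤ 1 :=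
    (mul_le_mul_of_nonneg_left (sumBB_le G j u x) (inv_nonneg.2 (DD_nonneg G x))).trans
      inv_mul_le_one
  calc f u x * (DD G x)⁻¹ ^ 2 * ∑ y, BB G j u x y
      = (f u x * (DD G x)⁻¹) * ((DD G x)⁻¹ * ∑ y, BB G j u x y) := by ring
    _ ≤ _ := mul_le_of_le_one_right (mul_nonneg (hf u x) (inv_nonneg.2 (DD_nonneg G x))) this

theorem sumBB_ge (hG : EvenFree G) {j : ℕ} (h1 : 1 ≤ j) (h4 : j ≤ 4) {u x : V}
    (hx : G.dist u x = j) : DD G x - 2 ≤ ∑ y, BB G j u x y := by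
  have hr : G.Reachable u x := SimpleGraph.Reachable.of_dist_ne_zero (by omega)
  have e1 : DD G x = (#{y | G.Adj x y} : ℝ) := by unfold DD AA; simp
  have e2 : ∑ y, BB G j u x y = (#{y | G.Adj x y ∧ G.dist u y = j + 1} : ℝ) := by
    unfold BB; simp
  have hsub : (univ.filter fun y => G.Adj x y) ⊆ (univ.filter fun y => G.Adj x y ∧ G.dist u y = j + 1) ∪
      ((univ.filter fun y => G.Adj x y ∧ G.dist u y = j) ∪
        (univ.filter fun y => G.Adj x y ∧ G.dist u y = j - 1)) := by
    intro y hy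
    simp only [mem_filter, mem_univ, true_and, mem_union] at hy ⊢
    have a := dist_step hr hy
    have b := dist_step (hr.trans hy.reachable) hy.symm
    have : G.dist u y = j + 1 ∨ G.dist u y = j ∨ G.dist u y = j - 1 := by omega
    tauto
  have c1 : #{y | G.Adj x y ∧ G.dist u y = j} ≤ 1 := by
    rw [card_le_one]
    intro y hy z hz
    simp only [mem_filter, mem_univ, true_and] at hy hz
    exact no_common hG h4 hr hx.ge hy.1 hz.1 hy.2 hz.2
  have c2 : #{y | G.Adj x y ∧ G.dist u y = j - 1} ≤ 1 := by
    rw [card_le_one]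
    intro y hy z hz
    simp only [mem_filter, mem_univ, true_and] at hy hz
    exact no_common hG (by omega) hr (by omega) hy.1 hz.1 hy.2 hz.2
  have := (card_le_card hsub).trans ((card_union_le _ _).trans
    (Nat.add_le_add_left (card_union_le _ _) _))
  rw [e1, e2]
  have h : #{y | G.Adj x y} ≤ #{y | G.Adj x y ∧ G.dist u y = j + 1} + 2 := by omega
  have : (#{y | G.Adj x y} : ℝ) ≤ (#{y | G.Adj x y ∧ G.dist u y = j + 1} : ℝ) + 2 := by
    exact_mod_cast h
  linarith

theorem DD_pos {u x : V} (hx : 1 ≤ G.dist u x) : 0 < DD G x := by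
  obtain ⟨y, hy, _, _⟩ := exists_parent (G := G) (u := u) (y := x) (j := G.dist u x - 1) (by omega)
  unfold DD
  exact sum_pos' (fun _ _ => AA_nonneg G _ _) ⟨y, mem_univ _, by simp [AA, hy]⟩

theorem tot_KK_ge (hG : EvenFree G) {j : ℕ} (h1 : 1 ≤ j) (h4 : j ≤ 4) {f : V → V → ℝ}
    (hf : ∀ u x, 0 ≤ f u x) (hs : ∀ u x, f u x ≠ 0 → G.dist u x = j)
    (hc : ∀ x, ∑ u, f u x ≤ DD G x) :
    tot f - 2 * Fintype.card V ≤ tot (KK G j (fun x => (DD G x)⁻¹) f) := by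
  rw [tot_KK]
  have h : tot f - 2 * ∑ x, ∑ u, f u x * (DD G x)⁻¹ ≤
      ∑ x, ∑ u, f u x * (DD G x)⁻¹ * ∑ y, BB G j u x y := by
    unfold tot
    rw [sum_comm (f := fun u y => f u y), mul_sum, ← sum_sub_distrib]
    refine sum_le_sum fun x _ => ?_
    rw [mul_sum, ← sum_sub_distrib]
    refine sum_le_sum fun u _ => ?_
    by_cases h0 : f u x = 0
    · simp [h0]
    have hd := hs u x h0
    have hp : 0 < DD G x := DD_pos G (u := u) (by omega)
    have := mul_le_mul_of_nonneg_left (sumBB_ge G hG h1 h4 hd)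
      (mul_nonneg (hf u x) (inv_nonneg.2 hp.le))
    refine le_trans (le_of_eq ?_) this
    field_simp
  have := tot_inv_le G hc
  linarith

theorem KK_supp (j : ℕ) (w : V → ℝ) (f : V → V → ℝ) (u x : V) (h : KK G j w f u x ≠ 0) :
    G.dist u x = j + 1 := by
  by_contra hne
  apply h
  unfold KK BB
  simp [hne]

theorem KK_one_le (hG : EvenFree G) {j : ℕ} (h4 : j ≤ 4) {f : V → V → ℝ}
    (hf : ∀ u x, f u x ≤ if G.dist u x = j then 1 else 0) (u y : V) :
    KK G j 1 f u y ≤ if G.dist u y = j + 1 then 1 else 0 := by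
  unfold KK
  split_ifs with h
  · calc ∑ x, f u x * (1 : V → ℝ) x * BB G j u x y
        ≤ ∑ x, if G.Adj y x ∧ G.dist u x = j then (1:ℝ) else 0 := by
          refine sum_le_sum fun x _ => ?_
          have := mul_le_mul_of_nonneg_right (hf u x) (BB_nonneg G j u x y)
          simp only [Pi.one_apply, mul_one]
          refine this.trans ?_
          unfold BB
          simp only [G.adj_comm y x]
          split_ifs <;> simp_all
      _ = (#{x | G.Adj y x ∧ G.dist u x = j} : ℝ) := by simp
      _ ≤ 1 := by
          norm_cast
          rw [card_le_one]
          intro a ha b hb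
          simp only [mem_filter, mem_univ, true_and] at ha hb
          exact no_common hG h4 (SimpleGraph.Reachable.of_dist_ne_zero (by omega)) (by omega)
            ha.1 hb.1 ha.2 hb.2
  · unfold BB
    simp [h]

noncomputable def ZZ (w1 w2 w3 w4 : V → ℝ) : ℝ :=
  tot (KK G 4 w4 (KK G 3 w3 (KK G 2 w2 (KK G 1 w1 (AA G)))))

theorem amgm (p q r s : ℝ) (hp : 0 ≤ p) (hq : 0 ≤ q) (hr : 0 ≤ r) (hs : 0 ≤ s) :
    5 * (p * q * r * s) ≤ 1 + p * q * r * s * (p + q + r + s) := by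
  set m := (p + q + r + s) / 4 with hm
  have hm0 : 0 ≤ m := by positivity
  have h1 : p * q * r * s ≤ m ^ 4 := by
    have a : p * q ≤ ((p + q) / 2) ^ 2 := by nlinarith [sq_nonneg (p - q)]
    have b : r * s ≤ ((r + s) / 2) ^ 2 := by nlinarith [sq_nonneg (r - s)]
    have c : (p + q) / 2 * ((r + s) / 2) ≤ m ^ 2 := by
      rw [hm]; nlinarith [sq_nonneg (p + q - r - s)]
    calc p * q * r * s = (p * q) * (r * s) := by ring
      _ ≤ ((p + q) / 2) ^ 2 * ((r + s) / 2) ^ 2 := by gcongr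
      _ = ((p + q) / 2 * ((r + s) / 2)) ^ 2 := by ring
      _ ≤ (m ^ 2) ^ 2 := by gcongr
      _ = m ^ 4 := by ring
  have h2 : p + q + r + s = 4 * m := by rw [hm]; ring
  rw [h2]
  have h0 : 0 ≤ p * q * r * s := by positivity
  by_cases h5 : 5 - 4 * m ≤ 0
  · nlinarith
  · have : p * q * r * s * (5 - 4 * m) ≤ m ^ 4 * (5 - 4 * m) :=
      mul_le_mul_of_nonneg_right h1 (by linarith)
    have h6 : 0 ≤ (m - 1) ^ 2 * (4 * m ^ 3 + 3 * m ^ 2 + 2 * m + 1) := by positivity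
    nlinarith

theorem ZZ_eq (w1 w2 w3 w4 : V → ℝ) : ZZ G w1 w2 w3 w4 =
    ∑ u, ∑ y, ∑ e, ∑ c, ∑ b, ∑ a,
      (AA G u a * BB G 1 u a b * BB G 2 u b c * BB G 3 u c e * BB G 4 u e y) *
        (w1 a * w2 b * w3 c * w4 e) := by
  unfold ZZ tot KK
  simp only [sum_mul]
  refine sum_congr rfl fun _ _ => sum_congr rfl fun _ _ => sum_congr rfl fun _ _ =>
    sum_congr rfl fun _ _ => sum_congr rfl fun _ _ => sum_congr rfl fun _ _ => by ring

theorem ZZ_amgm (d : ℝ) (hd : 0 ≤ d) (i : V → ℝ) (hi : ∀ x, 0 ≤ i x) :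
    5 * d ^ 4 * ZZ G i i i i ≤ ZZ G 1 1 1 1 + d ^ 5 * (ZZ G (fun x => i x ^ 2) i i i +
      ZZ G i (fun x => i x ^ 2) i i + ZZ G i i (fun x => i x ^ 2) i +
      ZZ G i i i (fun x => i x ^ 2)) := by
  simp only [ZZ_eq, ← sum_add_distrib, mul_sum]
  refine sum_le_sum fun u _ => sum_le_sum fun y _ => sum_le_sum fun e _ =>
    sum_le_sum fun c _ => sum_le_sum fun b _ => sum_le_sum fun a _ => ?_
  have h := amgm (d * i a) (d * i b) (d * i c) (d * i e) (mul_nonneg hd (hi _))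
    (mul_nonneg hd (hi _)) (mul_nonneg hd (hi _)) (mul_nonneg hd (hi _))
  have h0 : 0 ≤ AA G u a * BB G 1 u a b * BB G 2 u b c * BB G 3 u c e * BB G 4 u e y := by
    have := AA_nonneg G u a
    have := BB_nonneg G 1 u a b
    have := BB_nonneg G 2 u b c
    have := BB_nonneg G 3 u c e
    have := BB_nonneg G 4 u e y
    positivity
  have := mul_le_mul_of_nonneg_left h h0
  simp only [Pi.one_apply]
  nlinarith [this]

theorem main_count (hG : EvenFree G) (hV : 0 < Fintype.card V) (s d : ℝ) (hs : s = ∑ x, DD G x)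
    (hd : d = s / Fintype.card V) :
    d ^ 4 * (d - 40) ≤ Fintype.card V := by
  set n : ℝ := (Fintype.card V : ℝ) with hn
  have hn0 : 0 < n := by rw [hn]; exact_mod_cast hV
  have hs0 : 0 ≤ s := by rw [hs]; exact sum_nonneg fun _ _ => DD_nonneg G _
  have hd0 : 0 ≤ d := by rw [hd]; positivity
  set i : V → ℝ := fun x => (DD G x)⁻¹ with hi
  have hi0 : ∀ x, 0 ≤ i x := fun x => inv_nonneg.2 (DD_nonneg G x)
  have hi2 : ∀ x, 0 ≤ i x ^ 2 := fun x => sq_nonneg _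
  have P0 := AA_nonneg G
  have P1 := KK_nonneg G 1 hi0 P0
  have P2 := KK_nonneg G 2 hi0 P1
  have P3 := KK_nonneg G 3 hi0 P2
  have C0 : ∀ x, ∑ u, AA G u x ≤ DD G x := fun x => by
    unfold DD; exact le_of_eq (sum_congr rfl fun _ _ => AA_comm G _ _)
  have C1 := col_KK G 1 P0 C0
  have C2 := col_KK G 2 P1 C1
  have C3 := col_KK G 3 P2 C2
  have hA1 : ∀ u x, G.Adj u x → G.dist u x = 1 := fun u x h => SimpleGraph.dist_eq_one_iff_adj.2 h
  have G1 := tot_KK_ge G hG (j := 1) (by norm_num) (by norm_num) P0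
    (fun u x h => hA1 u x (by unfold AA at h; simpa using h)) C0
  have G2 := tot_KK_ge G hG (j := 2) (by norm_num) (by norm_num) P1 (KK_supp G 1 _ _) C1
  have G3 := tot_KK_ge G hG (j := 3) (by norm_num) (by norm_num) P2 (KK_supp G 2 _ _) C2
  have G4 := tot_KK_ge G hG (j := 4) (by norm_num) (by norm_num) P3 (KK_supp G 3 _ _) C3
  have G0 : tot (AA G) = s := by rw [hs]; rfl
  have hZ : s - 8 * n ≤ ZZ G i i i i := by unfold ZZ; linarith
  have Z4 : ZZ G i i i (fun x => i x ^ 2) ≤ n := tot_KK2_le G 4 P3 C3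
  have Z3 : ZZ G i i (fun x => i x ^ 2) i ≤ n :=
    (tot_KK_le G 4 (KK_nonneg G 3 hi2 P2)).trans (tot_KK2_le G 3 P2 C2)
  have Z2 : ZZ G i (fun x => i x ^ 2) i i ≤ n :=
    (tot_KK_le G 4 (KK_nonneg G 3 hi0 (KK_nonneg G 2 hi2 P1))).trans
      ((tot_KK_le G 3 (KK_nonneg G 2 hi2 P1)).trans (tot_KK2_le G 2 P1 C1))
  have Z1 : ZZ G (fun x => i x ^ 2) i i i ≤ n :=
    (tot_KK_le G 4 (KK_nonneg G 3 hi0 (KK_nonneg G 2 hi0 (KK_nonneg G 1 hi2 P0)))).trans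
      ((tot_KK_le G 3 (KK_nonneg G 2 hi0 (KK_nonneg G 1 hi2 P0))).trans
        ((tot_KK_le G 2 (KK_nonneg G 1 hi2 P0)).trans (tot_KK2_le G 1 P0 C0)))
  have hone : ZZ G 1 1 1 1 ≤ n ^ 2 := by
    have o0 : ∀ u x, AA G u x ≤ if G.dist u x = 1 then 1 else 0 := fun u x => by
      unfold AA
      by_cases h : G.Adj u x
      · simp [h, hA1 u x h]
      · simp [h]
    have o4 := KK_one_le G hG (j := 4) (by norm_num) (KK_one_le G hG (j := 3) (by norm_num)
      (KK_one_le G hG (j := 2) (by norm_num) (KK_one_le G hG (j := 1) (by norm_num) o0)))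
    unfold ZZ tot
    calc _ ≤ ∑ u : V, ∑ y : V, (1:ℝ) := sum_le_sum fun u _ => sum_le_sum fun y _ =>
          (o4 u y).trans (by split_ifs <;> norm_num)
      _ = n ^ 2 := by simp [hn]; ring
  have hA := ZZ_amgm G d hd0 i hi0
  have hsn : s = d * n := by rw [hd]; field_simp
  have h5 : 5 * d ^ 4 * (s - 8 * n) ≤ n ^ 2 + d ^ 5 * (4 * n) := by
    calc 5 * d ^ 4 * (s - 8 * n) ≤ 5 * d ^ 4 * ZZ G i i i i := by gcongr
      _ ≤ _ := hA
      _ ≤ _ := by gcongr; linarith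
  rw [hsn] at h5
  have : n * (d ^ 4 * (d - 40)) ≤ n * n := by nlinarith
  exact le_of_mul_le_mul_left this hn0
end count

open Classical in
theorem lower_aux (q k n r : ℕ) (hq : 41 ≤ q) (hr : r = q ^ 3) (hk : k ≤ q ^ 2)
    (G : SimpleGraph (Fin n)) (hG : EvenFree G) (c : Fin n → Fin r) (hc : IsCompletePartition G c)
    (hk' : ∀ i, {v : Fin n | c v = i}.ncard ≤ k) :
    ((q : ℝ) - 1) ^ 4 * (q - 41) ≤ q ^ 3 * k := by
  have hr1 : 1 < r := by rw [hr]; exact Nat.one_lt_pow (by norm_num) (by omega)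
  have hn : n ≤ r * k := by
    have := Finset.card_le_mul_card_image_of_maps_to (f := c) (s := Finset.univ) (t := Finset.univ)
      (fun _ _ => Finset.mem_univ _) k (fun i _ => by
        have h := hk' i
        rw [Set.ncard_eq_toFinset_card'] at h
        convert h using 2
        ext v; simp)
    simpa [mul_comm] using this
  have hn0 : 0 < n := by
    obtain ⟨u, _⟩ := hc ⟨0, by omega⟩ ⟨1, hr1⟩ (by simp)
    exact u.pos
  have hs : (r : ℝ) * (r - 1) ≤ ∑ x, DD G x := by
    have e : ∑ x, DD G x =
        ((Finset.univ.filter fun p : Fin n × Fin n => G.Adj p.1 p.2).card : ℝ) := by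
      unfold DD AA
      rw [← Finset.univ_product_univ, Finset.card_filter, Finset.sum_product]
      push_cast
      rfl
    rw [e]
    have h : (Finset.univ : Finset (Fin r)).offDiag.card ≤
        (Finset.univ.filter fun p : Fin n × Fin n => G.Adj p.1 p.2).card := by
      apply Finset.card_le_card_of_surjOn (fun p => (c p.1, c p.2))
      rintro ⟨i, j⟩ hij
      simp at hij
      obtain ⟨u, v, hu, hv, ha⟩ := hc i j hij
      exact ⟨(u, v), by simpa using ha, by simp [hu, hv]⟩
    rw [Finset.offDiag_card] at h
    simp only [Finset.card_univ, Fintype.card_fin] at h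
    have h2 : r * (r - 1) ≤ (Finset.univ.filter fun p : Fin n × Fin n => G.Adj p.1 p.2).card := by
      rw [Nat.mul_sub, mul_one]; exact h
    have h3 : ((r * (r - 1) : ℕ) : ℝ) ≤
        ((Finset.univ.filter fun p : Fin n × Fin n => G.Adj p.1 p.2).card : ℝ) := by
      exact_mod_cast h2
    rwa [Nat.cast_mul, Nat.cast_sub hr1.le, Nat.cast_one] at h3
  have hm := main_count G hG (by simpa using hn0) _ _ rfl rfl
  simp only [Fintype.card_fin] at hm
  set d : ℝ := (∑ x, DD G x) / n with hd
  have hq' : (41:ℝ) ≤ q := by exact_mod_cast hq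
  have hnR : (n:ℝ) ≤ r * k := by exact_mod_cast hn
  have hn0R : (0:ℝ) < n := by exact_mod_cast hn0
  have hkR : (k:ℝ) ≤ q ^ 2 := by exact_mod_cast hk
  have hrR : (r:ℝ) = q ^ 3 := by exact_mod_cast hr
  have hd1 : (q:ℝ) - 1 ≤ d := by
    rw [hd, le_div_iff₀ hn0R]
    calc ((q:ℝ) - 1) * n ≤ (q - 1) * (r * q ^ 2) := by
          apply mul_le_mul_of_nonneg_left _ (by linarith)
          refine hnR.trans ?_
          gcongr
      _ ≤ r * (r - 1) := by
          have : ((q:ℝ) - 1) * q ^ 2 ≤ r - 1 := by rw [hrR]; nlinarith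
          nlinarith [(Nat.cast_nonneg r : (0:ℝ) ≤ r)]
      _ ≤ _ := hs
  calc ((q : ℝ) - 1) ^ 4 * (q - 41) ≤ d ^ 4 * (d - 40) := by
        apply mul_le_mul _ (by linarith) (by linarith) (by positivity)
        exact pow_le_pow_left₀ (by linarith) hd1 4
    _ ≤ (n : ℝ) := hm
    _ ≤ _ := by rw [← hrR]; exact hnR

theorem fC4C6C8C10_asymptotics :
    Filter.Tendsto
      (fun e : ℕ =>
        (fC4C6C8C10 (3 ^ (3 * (2 * e + 1))) : ℝ) / (3 ^ (2 * (2 * e + 1)) : ℝ))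
      Filter.atTop (nhds 1) := by
  have hup : ∀ e : ℕ, fC4C6C8C10 (3 ^ (3 * (2 * e + 1))) ≤ 3 ^ (2 * (2 * e + 1)) := fun e =>
    Nat.sInf_le (upper e)
  have hq : Filter.Tendsto (fun e : ℕ => (3:ℝ) ^ (2 * e + 1)) Filter.atTop Filter.atTop :=
    (tendsto_pow_atTop_atTop_of_one_lt (by norm_num)).comp
      (Filter.tendsto_atTop_mono (fun e => by simp only [id]; omega) Filter.tendsto_id)
  have hinv := hq.inv_tendsto_atTop
  have hlim : Filter.Tendsto (fun e : ℕ => (1 - ((3:ℝ) ^ (2 * e + 1))⁻¹) ^ 4 *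
      (1 - 41 * ((3:ℝ) ^ (2 * e + 1))⁻¹)) Filter.atTop (nhds 1) := by
    have := ((hinv.const_sub 1).pow 4).mul ((hinv.const_mul 41).const_sub 1)
    simpa using this
  refine tendsto_of_tendsto_of_tendsto_of_le_of_le' hlim tendsto_const_nhds ?_ ?_
  · filter_upwards [hq.eventually_ge_atTop 41] with e he
    obtain ⟨n, G, h4, h6, h8, h10, c, hc, hk⟩ :=
      Nat.sInf_mem (s := {k : ℕ | ∃ (n : ℕ) (G : SimpleGraph (Fin n)),
        ¬ ContainsCopy (cycGraph 4) G ∧ ¬ ContainsCopy (cycGraph 6) G ∧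
        ¬ ContainsCopy (cycGraph 8) G ∧ ¬ ContainsCopy (cycGraph 10) G ∧
        ∃ c : Fin n → Fin (3 ^ (3 * (2 * e + 1))), IsCompletePartition G c ∧
          ∀ i, {v : Fin n | c v = i}.ncard ≤ k}) ⟨_, upper e⟩
    have := lower_aux (3 ^ (2 * e + 1)) (fC4C6C8C10 (3 ^ (3 * (2 * e + 1)))) n _
      (by exact_mod_cast he) (by rw [← pow_mul, mul_comm])
      ((hup e).trans (le_of_eq (by rw [← pow_mul, mul_comm]))) G ⟨h4, h6, h8, h10⟩ c hc hk
    push_cast at this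
    have h2 : (3:ℝ) ^ (2 * (2 * e + 1)) = ((3:ℝ) ^ (2 * e + 1)) ^ 2 := by
      rw [← pow_mul, mul_comm]
    rw [h2]
    generalize (fC4C6C8C10 (3 ^ (3 * (2 * e + 1))) : ℝ) = k at this ⊢
    generalize (3:ℝ) ^ (2 * e + 1) = q at this he ⊢
    have hq0 : 0 < q := by linarith
    rw [le_div_iff₀ (by positivity)]
    have e1 : (1 - q⁻¹) ^ 4 * (1 - 41 * q⁻¹) * q ^ 2 = ((q - 1) ^ 4 * (q - 41)) / q ^ 3 := by
      field_simp
    rw [e1, div_le_iff₀ (by positivity)]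
    linarith
  · refine Filter.Eventually.of_forall fun e => ?_
    rw [div_le_one (by positivity)]
    exact_mod_cast hup e
end
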